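/- arXiv:1512.08267 — 2 statements merged into one kernel-verified Lean document; each statement's English description precedes it below -/
import Mathlib

section
/- For each ε > 0 there exists a constant c(ε) such that the following holds. Let P be a set of m distinct points and C a set of n distinct circles in ℝ³, and assume that every algebraic surface in ℝ³ of degree at most c(ε) contains at most q₂ circles of C. Then I(P,C) ≤ α·(m^{3/7+ε}·n^{6/7} + m^{3/5+ε}·n^{3/5}·q₂^{1/5} + m + n), where α is a constant depending only on ε. -/
attribute [local instance] Classical.propDecidable

noncomputable section

/-- The number of incidences between a finite set of points and a finite set of
curves (subsets of `ℝ^d`): the number of pairs `(p, γ)` with `p ∈ γ`. -/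
def Incidences {d : ℕ} (P : Finset (Fin d → ℝ)) (C : Finset (Set (Fin d → ℝ))) : ℕ :=
  ((P ×ˢ C).filter fun pc => pc.1 ∈ pc.2).card

/-- A line in `ℝ^d`. -/
def IsLine {d : ℕ} (ℓ : Set (Fin d → ℝ)) : Prop :=
  ∃ a b : Fin d → ℝ, b ≠ 0 ∧ ℓ = {x | ∃ t : ℝ, x = a + t • b}

/-- The real zero set of a polynomial in `d` variables. -/
def zeroSet {d : ℕ} (f : MvPolynomial (Fin d) ℝ) : Set (Fin d → ℝ) :=
  {x | MvPolynomial.eval x f = 0}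

/-- A real algebraic set in `ℝ^d`. -/
def IsAlgSet {d : ℕ} (V : Set (Fin d → ℝ)) : Prop :=
  ∃ S : Set (MvPolynomial (Fin d) ℝ),
    V = {x | ∀ f ∈ S, MvPolynomial.eval x f = 0}

/-- A real algebraic set in `ℝ^d` cut out by polynomials of degree at most `E`. -/
def IsAlgSetDeg {d : ℕ} (E : ℕ) (V : Set (Fin d → ℝ)) : Prop :=
  ∃ S : Set (MvPolynomial (Fin d) ℝ), (∀ f ∈ S, f.totalDegree ≤ E) ∧
    V = {x | ∀ f ∈ S, MvPolynomial.eval x f = 0}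

/-- An irreducible real algebraic set: a nonempty algebraic set that is not the
union of two proper algebraic subsets. -/
def IsIrredAlgSet {d : ℕ} (V : Set (Fin d → ℝ)) : Prop :=
  IsAlgSet V ∧ V.Nonempty ∧
    ∀ V₁ V₂ : Set (Fin d → ℝ), IsAlgSet V₁ → IsAlgSet V₂ → V = V₁ ∪ V₂ →
      V = V₁ ∨ V = V₂

/-- The real algebraic set `V` has dimension at least `j`: there is a strictly
increasing chain of `j+1` irreducible algebraic sets contained in `V`. -/
def AlgDimGE {d : ℕ} (j : ℕ) (V : Set (Fin d → ℝ)) : Prop :=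
  ∃ W : Fin (j + 1) → Set (Fin d → ℝ),
    (∀ i, IsIrredAlgSet (W i)) ∧
    (∀ i i' : Fin (j + 1), i < i' → W i ⊂ W i') ∧
    W (Fin.last j) ⊆ V

/-- The real algebraic set `V` has dimension exactly `j`. -/
def HasAlgDim {d : ℕ} (j : ℕ) (V : Set (Fin d → ℝ)) : Prop :=
  AlgDimGE j V ∧ ¬ AlgDimGE (j + 1) V

/-- An irreducible algebraic curve of degree at most `E` in `ℝ^d`: an irreducible
real algebraic set of dimension one, cut out by polynomials of degree at most `E`. -/
def IsIrredCurve {d : ℕ} (E : ℕ) (γ : Set (Fin d → ℝ)) : Prop :=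
  IsAlgSetDeg E γ ∧ IsIrredAlgSet γ ∧ HasAlgDim 1 γ

/-- A finite family `C` of curves has `k` degrees of freedom with multiplicity `s`:
(i) for every `k` distinct points, at most `s` curves of `C` pass through all of
them, and (ii) any two distinct curves of `C` intersect in at most `s` points. -/
def HasDegreesOfFreedom {d : ℕ} (C : Finset (Set (Fin d → ℝ))) (k s : ℕ) : Prop :=
  (∀ pts : Finset (Fin d → ℝ), pts.card = k →
      (C.filter fun γ => ∀ p ∈ pts, p ∈ γ).card ≤ s) ∧
  ∀ γ₁ ∈ C, ∀ γ₂ ∈ C, γ₁ ≠ γ₂ → (γ₁ ∩ γ₂).Finite ∧ (γ₁ ∩ γ₂).ncard ≤ s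

/-- A circle in `ℝ³`: the intersection of a sphere of positive radius with a plane
through its center. -/
def IsCircle (γ : Set (Fin 3 → ℝ)) : Prop :=
  ∃ (c v : Fin 3 → ℝ) (ρ : ℝ), 0 < ρ ∧ v ≠ 0 ∧
    γ = {x | (∑ i, (x i - c i) ^ 2) = ρ ^ 2 ∧ (∑ i, v i * (x i - c i)) = 0}

theorem odd_module_aux {A : Type} [CommRing A] [Algebra ℝ A] (n : ℕ) :
    ∀ (M : Type) [AddCommGroup M] [Module ℝ M] [Module A M] [IsScalarTower ℝ A M]
      [FiniteDimensional ℝ M], Module.finrank ℝ M = n → Odd n → Nonempty (A →ₐ[ℝ] ℝ) := by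
  induction n using Nat.strong_induction_on with
  | _ n ih =>
    intro M _ _ _ _ _ hn hodd
    have hpos : 0 < Module.finrank ℝ M := by rw [hn]; exact hodd.pos
    have hnt : Nontrivial M := Module.finrank_pos_iff.mp hpos
    by_cases hs : IsSimpleModule A M
    · obtain ⟨m, hm, ⟨e⟩⟩ := isSimpleModule_iff_quot_maximal.mp hs
      let _ : Field (A ⧸ m) := Ideal.Quotient.field m
      let e' : M ≃ₗ[ℝ] (A ⧸ m) := e.restrictScalars ℝ
      have hfd : FiniteDimensional ℝ (A ⧸ m) := e'.finiteDimensional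
      have hfr : Module.finrank ℝ (A ⧸ m) = n := by rw [← hn]; exact e'.finrank_eq.symm
      rcases Real.nonempty_algEquiv_or (A ⧸ m) with ⟨⟨f⟩⟩ | ⟨⟨f⟩⟩
      · exact ⟨f.toAlgHom.comp (Ideal.Quotient.mkₐ ℝ m)⟩
      · exfalso
        have := f.toLinearEquiv.finrank_eq
        rw [hfr, Complex.finrank_real_complex] at this
        rw [this] at hodd
        exact absurd hodd (by decide)
    · have : ∃ N : Submodule A M, N ≠ ⊥ ∧ N ≠ ⊤ := by
        by_contra hcon
        push Not at hcon
        apply hs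
        rw [isSimpleModule_iff]
        exact { eq_bot_or_eq_top := fun N => by
                  by_cases h : N = ⊥
                  · exact Or.inl h
                  · exact Or.inr (hcon N h) }
      obtain ⟨N, hN0, hN1⟩ := this
      let N' : Submodule ℝ M := N.restrictScalars ℝ
      have hsum := Submodule.finrank_quotient_add_finrank N'
      have hlt : Module.finrank ℝ N' < n := by
        rw [← hn]
        apply Submodule.finrank_lt
        intro h
        exact hN1 (by rwa [Submodule.restrictScalars_eq_top_iff] at h)
      have hpos' : 0 < Module.finrank ℝ N' := by
        rw [Nat.pos_iff_ne_zero]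
        intro h
        rw [Submodule.finrank_eq_zero] at h
        exact hN0 (by rwa [Submodule.restrictScalars_eq_bot_iff] at h)
      by_cases ho : Odd (Module.finrank ℝ N')
      · have hst : IsScalarTower ℝ A N :=
          ⟨fun x y z => Subtype.ext (by simp)⟩
        have hr : Module.finrank ℝ N = Module.finrank ℝ N' := rfl
        have hfd : FiniteDimensional ℝ N := inferInstanceAs (FiniteDimensional ℝ N')
        have := ih _ hlt N hr ho
        exact this
      · have hfd : FiniteDimensional ℝ (M ⧸ N) :=
          inferInstanceAs (FiniteDimensional ℝ (M ⧸ N'))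
        have hst : IsScalarTower ℝ A (M ⧸ N) :=
          ⟨fun x y z => by
            obtain ⟨z, rfl⟩ := Submodule.Quotient.mk_surjective N z
            rw [← Submodule.Quotient.mk_smul, ← Submodule.Quotient.mk_smul,
              ← Submodule.Quotient.mk_smul, smul_assoc]⟩
        have hr : Module.finrank ℝ (M ⧸ N) = Module.finrank ℝ (M ⧸ N') := rfl
        refine ih (Module.finrank ℝ (M ⧸ N')) (by omega) (M ⧸ N) hr ?_
        rw [hn] at hsum
        rw [Nat.not_odd_iff_even] at ho
        rw [← hsum] at hodd
        exact (Nat.odd_add.mp hodd).mpr ho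

theorem odd_algebra_real_point {A : Type} [CommRing A] [Algebra ℝ A] [FiniteDimensional ℝ A]
    (h : Odd (Module.finrank ℝ A)) : Nonempty (A →ₐ[ℝ] ℝ) :=
  odd_module_aux (Module.finrank ℝ A) A rfl h

open MvPolynomial in
/-- The products `∏ X_i^(b_i mod d) g_i^(b_i div d)`. -/
noncomputable def Bfam {n : ℕ} {R : Type} [CommRing R] (d : ℕ) (g : Fin n → MvPolynomial (Fin n) R)
    (b : Fin n →₀ ℕ) : MvPolynomial (Fin n) R :=
  ∏ i, (MvPolynomial.X i ^ (b i % d) * g i ^ (b i / d))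

theorem Bfam_map {n : ℕ} {R S : Type} [CommRing R] [CommRing S] (φ : R →+* S) (d : ℕ)
    (g : Fin n → MvPolynomial (Fin n) R) (b : Fin n →₀ ℕ) :
    MvPolynomial.map φ (Bfam d g b) = Bfam d (fun i => MvPolynomial.map φ (g i)) b := by
  simp [Bfam, map_prod]

theorem Bfam_totalDegree {n : ℕ} {R : Type} [CommRing R] [Nontrivial R] (d : ℕ)
    (g : Fin n → MvPolynomial (Fin n) R) (hg : ∀ i, (g i).totalDegree ≤ d) (b : Fin n →₀ ℕ) :
    (Bfam d g b).totalDegree ≤ b.degree := by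
  rw [Finsupp.degree_eq_sum]
  refine (MvPolynomial.totalDegree_finsetProd _ _).trans (Finset.sum_le_sum fun i _ => ?_)
  refine (MvPolynomial.totalDegree_mul _ _).trans ?_
  have h1 : (MvPolynomial.X i ^ (b i % d) : MvPolynomial (Fin n) R).totalDegree ≤ b i % d := by
    rw [MvPolynomial.totalDegree_X_pow]
  have h2 : (g i ^ (b i / d)).totalDegree ≤ (b i / d) * d :=
    (MvPolynomial.totalDegree_pow _ _).trans (Nat.mul_le_mul_left _ (hg i))
  have := Nat.mod_add_div' (b i) d
  omega

theorem Bfam_pow {n : ℕ} {R : Type} [CommRing R] (d : ℕ)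
    (b : Fin n →₀ ℕ) :
    Bfam d (fun i => (MvPolynomial.X i ^ d : MvPolynomial (Fin n) R)) b
      = MvPolynomial.monomial b 1 := by
  rw [MvPolynomial.monomial_eq, Bfam, Finsupp.prod_fintype _ _ (by simp)]
  simp only [map_one, one_mul]
  refine Finset.prod_congr rfl fun i _ => ?_
  rw [← pow_mul, ← pow_add, Nat.mod_add_div]

theorem Bfam_mul {n : ℕ} {R : Type} [CommRing R] (d : ℕ) (hd : 0 < d)
    (g : Fin n → MvPolynomial (Fin n) R) (b : Fin n →₀ ℕ) (i : Fin n) :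
    Bfam d g b * g i = Bfam d g (b + Finsupp.single i d) := by
  classical
  rw [Bfam, Bfam, ← Finset.mul_prod_erase _ _ (Finset.mem_univ i),
    ← Finset.mul_prod_erase (a := i) _ _ (Finset.mem_univ i)]
  have h : ∀ j ∈ Finset.univ.erase i, (b + Finsupp.single i d) j = b j := by
    intro j hj
    have : i ≠ j := fun h => (Finset.ne_of_mem_erase hj) h.symm
    simp [this]
  have h3 : ∏ j ∈ Finset.univ.erase i, (MvPolynomial.X j ^ ((b + Finsupp.single i d) j % d) *
        g j ^ ((b + Finsupp.single i d) j / d)) =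
      ∏ j ∈ Finset.univ.erase i, (MvPolynomial.X j ^ (b j % d) * g j ^ (b j / d)) :=
    Finset.prod_congr rfl (fun j hj => by rw [h j hj])
  rw [h3]
  have h2 : (b + Finsupp.single i d) i = b i + d := by simp
  rw [h2, Nat.add_mod_right, Nat.add_div_right _ hd]
  ring

theorem Bfam_dvd {n : ℕ} {R : Type} [CommRing R] (d : ℕ) (hd : 0 < d)
    (g : Fin n → MvPolynomial (Fin n) R) (b : Fin n →₀ ℕ) (i : Fin n) (h : d ≤ b i) :
    g i ∣ Bfam d g b := by
  have : g i ∣ MvPolynomial.X i ^ (b i % d) * g i ^ (b i / d) := by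
    apply Dvd.dvd.mul_left
    exact dvd_pow_self _ (Nat.div_pos h hd).ne'
  exact this.trans (Finset.dvd_prod_of_mem _ (Finset.mem_univ i))

/-- Finite index set of exponents of degree at most `k`. -/
abbrev ExpLe (n k : ℕ) : Type := {b : Fin n →₀ ℕ // b.degree ≤ k}

noncomputable instance (n k : ℕ) : Fintype (ExpLe n k) :=
  (Finsupp.finite_of_degree_le k).fintype

noncomputable instance (n k : ℕ) : DecidableEq (ExpLe n k) := Classical.decEq _

theorem coeff_sum_fam {n k : ℕ} (B : (Fin n →₀ ℕ) → MvPolynomial (Fin n) ℝ)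
    (v : ExpLe n k → ℝ) (a : ExpLe n k) :
    MvPolynomial.coeff a.1 (∑ b : ExpLe n k, v b • B b.1) =
      (Matrix.of (fun a b : ExpLe n k => MvPolynomial.coeff a.1 (B b.1))).mulVec v a := by
  rw [MvPolynomial.coeff_sum]
  simp only [Matrix.mulVec, dotProduct, Matrix.of_apply, MvPolynomial.coeff_smul, smul_eq_mul]
  exact Finset.sum_congr rfl fun b _ => mul_comm _ _

theorem fam_linearIndependent {n : ℕ} (B : (Fin n →₀ ℕ) → MvPolynomial (Fin n) ℝ)
    (hdet : ∀ k, (Matrix.of (fun a b : ExpLe n k => MvPolynomial.coeff a.1 (B b.1))).det ≠ 0) :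
    LinearIndependent ℝ B := by
  rw [linearIndependent_iff]
  intro l hl
  let k := l.support.sup Finsupp.degree
  let v : ExpLe n k → ℝ := fun b => l b.1
  have hsum : ∑ b : ExpLe n k, v b • B b.1 = 0 := by
    rw [← hl, Finsupp.linearCombination_apply, Finsupp.sum]
    symm
    rw [← Finset.sum_coe_sort]
    refine Finset.sum_of_injOn
      (fun b => (⟨b.1, Finset.le_sup (f := Finsupp.degree) b.2⟩ : ExpLe n k)) ?_ ?_ ?_ ?_
    · intro x _ y _ h
      exact Subtype.ext (congrArg (fun z => z.1) h)
    · intro x _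
      simp
    · intro b _ hb
      have : l b.1 = 0 := by
        by_contra hne
        exact hb ⟨⟨b.1, Finsupp.mem_support_iff.mpr hne⟩, by simp, rfl⟩
      simp [v, this]
    · intro b _
      rfl
  have hv : (Matrix.of (fun a b : ExpLe n k => MvPolynomial.coeff a.1 (B b.1))).mulVec v = 0 := by
    ext a
    rw [← coeff_sum_fam, hsum]
    simp
  have hv0 := Matrix.eq_zero_of_mulVec_eq_zero (hdet k) hv
  ext b
  by_contra hne
  have hb : b ∈ l.support := Finsupp.mem_support_iff.mpr hne
  exact hne (congrFun hv0 ⟨b, Finset.le_sup (f := Finsupp.degree) hb⟩)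

theorem fam_span {n : ℕ} (B : (Fin n →₀ ℕ) → MvPolynomial (Fin n) ℝ)
    (hB : ∀ b, (B b).totalDegree ≤ b.degree)
    (hdet : ∀ k, (Matrix.of (fun a b : ExpLe n k => MvPolynomial.coeff a.1 (B b.1))).det ≠ 0) :
    ⊤ ≤ Submodule.span ℝ (Set.range B) := by
  intro p _
  let k := p.totalDegree
  let M := Matrix.of (fun a b : ExpLe n k => MvPolynomial.coeff a.1 (B b.1))
  let w : ExpLe n k → ℝ := fun a => MvPolynomial.coeff a.1 p
  let v := (M⁻¹).mulVec w
  have hMv : M.mulVec v = w := by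
    simp only [v]
    rw [Matrix.mulVec_mulVec, Matrix.mul_nonsing_inv _ (isUnit_iff_ne_zero.mpr (hdet k)),
      Matrix.one_mulVec]
  have hp : p = ∑ b : ExpLe n k, v b • B b.1 := by
    ext a
    by_cases ha : a.degree ≤ k
    · have := coeff_sum_fam B v ⟨a, ha⟩
      rw [this]
      exact (congrFun hMv ⟨a, ha⟩).symm
    · push Not at ha
      rw [MvPolynomial.coeff_eq_zero_of_totalDegree_lt (by simpa [Finsupp.degree_apply] using ha)]
      rw [MvPolynomial.coeff_eq_zero_of_totalDegree_lt]
      refine lt_of_le_of_lt (MvPolynomial.totalDegree_finsetSum_le (d := k) fun b _ => ?_)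
        (by simpa [Finsupp.degree_apply] using ha)
      exact (MvPolynomial.totalDegree_smul_le _ _).trans ((hB _).trans b.2)
  rw [hp]
  exact Submodule.sum_mem _ fun b _ =>
    Submodule.smul_mem _ _ (Submodule.subset_span ⟨b.1, rfl⟩)

/-- If the family `B` is a basis, the system `g = 0` has a real solution for odd `d`. -/
theorem real_zero_of_basis {n : ℕ} (d : ℕ) (hd : Odd d) (g : Fin n → MvPolynomial (Fin n) ℝ)
    (hli : LinearIndependent ℝ (Bfam d g))
    (hsp : ⊤ ≤ Submodule.span ℝ (Set.range (Bfam d g))) :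
    ∃ x : Fin n → ℝ, ∀ i, MvPolynomial.eval x (g i) = 0 := by
  classical
  have hd0 : 0 < d := hd.pos
  let b := Module.Basis.mk hli hsp
  have hb : ∀ e, b e = Bfam d g e := fun e => by simp [b]
  let I : Ideal (MvPolynomial (Fin n) ℝ) := Ideal.span (Set.range g)
  let ι : (Fin n → Fin d) → (Fin n →₀ ℕ) := fun a => Finsupp.equivFunOnFinite.symm fun i => (a i : ℕ)
  have hιinj : Function.Injective ι := by
    intro a a' h
    ext i
    have := DFunLike.congr_fun h i
    simpa [ι] using this
  let φ : MvPolynomial (Fin n) ℝ →ₗ[ℝ] ((Fin n → Fin d) → ℝ) :=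
    LinearMap.pi fun a => (Finsupp.lapply (ι a)).comp b.repr.toLinearMap
  have hφ : ∀ e a, φ (b e) a = if e = ι a then 1 else 0 := by
    intro e a
    simp [φ, Finsupp.single_apply]
  have hsurj : Function.Surjective φ := by
    intro w
    refine ⟨∑ a, w a • b (ι a), ?_⟩
    ext a'
    rw [map_sum, Finset.sum_apply]
    simp only [map_smul, Pi.smul_apply, hφ, smul_eq_mul]
    rw [Finset.sum_eq_single a']
    · simp
    · intro a _ hne
      rw [if_neg (fun h => hne (hιinj h)), mul_zero]
    · simp
  have hker : LinearMap.ker φ = I.restrictScalars ℝ := by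
    apply le_antisymm
    · intro p hp
      rw [← b.linearCombination_repr p, Finsupp.linearCombination_apply]
      refine Submodule.sum_mem _ fun e he => ?_
      refine Submodule.smul_mem _ _ ?_
      by_cases hred : ∀ i, e i < d
      · exfalso
        have h1 : φ p (fun i => ⟨e i, hred i⟩) = 0 := by
          rw [LinearMap.mem_ker.mp hp]; rfl
        have h2 : ι (fun i => ⟨e i, hred i⟩) = e := by
          ext i; simp [ι]
        have h3 : φ p (fun i => ⟨e i, hred i⟩) = b.repr p e := by
          simp [φ, h2]
        rw [h3] at h1
        exact (Finsupp.mem_support_iff.mp he) h1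
      · push Not at hred
        obtain ⟨i, hi⟩ := hred
        rw [hb]
        change Bfam d g e ∈ I
        exact Ideal.mem_of_dvd I (Bfam_dvd d hd0 g e i hi) (Ideal.subset_span ⟨i, rfl⟩)
    · intro p hp
      change p ∈ I at hp
      have hmul : ∀ c i, φ (c * g i) = 0 := by
        intro c i
        rw [← b.linearCombination_repr c, Finsupp.linearCombination_apply, Finsupp.sum,
          Finset.sum_mul, map_sum]
        refine Finset.sum_eq_zero fun e _ => ?_
        rw [smul_mul_assoc, map_smul, hb, Bfam_mul d hd0 g e i, ← hb]
        have : φ (b (e + Finsupp.single i d)) = 0 := by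
          ext a
          rw [hφ, if_neg]
          · rfl
          · intro h
            have := DFunLike.congr_fun h i
            simp [ι] at this
            have h2 := (a i).2
            omega
        rw [this, smul_zero]
      obtain ⟨c, rfl⟩ := Ideal.mem_span_range_iff_exists_fun.mp hp
      rw [LinearMap.mem_ker, map_sum]
      exact Finset.sum_eq_zero fun i _ => hmul _ _
  let e1 : ((MvPolynomial (Fin n) ℝ) ⧸ LinearMap.ker φ) ≃ₗ[ℝ] ((Fin n → Fin d) → ℝ) :=
    φ.quotKerEquivOfSurjective hsurj
  let e2 : ((MvPolynomial (Fin n) ℝ) ⧸ I.restrictScalars ℝ) ≃ₗ[ℝ] ((Fin n → Fin d) → ℝ) :=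
    (Submodule.quotEquivOfEq _ _ hker.symm).trans e1
  let e3 : ((MvPolynomial (Fin n) ℝ) ⧸ I) ≃ₗ[ℝ] ((Fin n → Fin d) → ℝ) :=
    (Submodule.Quotient.restrictScalarsEquiv ℝ I).symm.trans e2
  have hfd : FiniteDimensional ℝ ((MvPolynomial (Fin n) ℝ) ⧸ I) := e3.symm.finiteDimensional
  have hodd : Odd (Module.finrank ℝ ((MvPolynomial (Fin n) ℝ) ⧸ I)) := by
    rw [e3.finrank_eq, Module.finrank_fintype_fun_eq_card, Fintype.card_fun, Fintype.card_fin,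
      Fintype.card_fin]
    exact hd.pow
  obtain ⟨ψ⟩ := odd_algebra_real_point hodd
  let χ : MvPolynomial (Fin n) ℝ →ₐ[ℝ] ℝ := ψ.comp (Ideal.Quotient.mkₐ ℝ I)
  refine ⟨fun i => χ (MvPolynomial.X i), fun i => ?_⟩
  have h1 : χ = MvPolynomial.aeval fun i => χ (MvPolynomial.X i) := MvPolynomial.aeval_unique χ
  have h2 : χ (g i) = 0 := by
    have : Ideal.Quotient.mk I (g i) = 0 :=
      Ideal.Quotient.eq_zero_iff_mem.mpr (Ideal.subset_span ⟨i, rfl⟩)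
    simp [χ, this]
  rw [h1, MvPolynomial.aeval_eq_eval] at h2
  exact h2

/-- Approximate zeros of perturbed systems of odd degree. -/
theorem approx_zero {n : ℕ} (d : ℕ) (hd : Odd d) (f : Fin n → MvPolynomial (Fin n) ℝ)
    (hf : ∀ i, (f i).totalDegree ≤ d) (δ : ℝ) (hδ : 0 < δ) :
    ∃ x : Fin n → ℝ, ∀ i, |MvPolynomial.eval x (f i)| ≤ δ * |x i| ^ d := by
  classical
  let G : Fin n → MvPolynomial (Fin n) (Polynomial ℝ) := fun i =>
    MvPolynomial.X i ^ d + MvPolynomial.C Polynomial.X * MvPolynomial.map Polynomial.C (f i)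
  let g : ℝ → Fin n → MvPolynomial (Fin n) ℝ := fun s i =>
    MvPolynomial.X i ^ d + MvPolynomial.C s * f i
  have hG : ∀ s i, MvPolynomial.map (Polynomial.evalRingHom s) (G i) = g s i := by
    intro s i
    have : (Polynomial.evalRingHom s).comp Polynomial.C = RingHom.id ℝ := by
      ext; simp
    simp [G, g, MvPolynomial.map_map, this, MvPolynomial.map_id]
  let M : ∀ k, Matrix (ExpLe n k) (ExpLe n k) (Polynomial ℝ) := fun k =>
    Matrix.of fun a b => MvPolynomial.coeff a.1 (Bfam d G b.1)
  have hM : ∀ k s, (M k).map (Polynomial.evalRingHom s) =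
      Matrix.of (fun a b : ExpLe n k => MvPolynomial.coeff a.1 (Bfam d (g s) b.1)) := by
    intro k s
    ext a b
    simp only [M, Matrix.map_apply, Matrix.of_apply]
    rw [← MvPolynomial.coeff_map, Bfam_map]
    simp only [hG]
  have hMdet : ∀ k s, (Matrix.of (fun a b : ExpLe n k =>
      MvPolynomial.coeff a.1 (Bfam d (g s) b.1))).det = (M k).det.eval s := by
    intro k s
    rw [← hM]
    exact (RingHom.map_det (Polynomial.evalRingHom s) (M k)).symm
  have hne : ∀ k, (M k).det ≠ 0 := by
    intro k h0
    have h1 := hMdet k 0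
    rw [h0, Polynomial.eval_zero] at h1
    have h2 : (Matrix.of (fun a b : ExpLe n k =>
      MvPolynomial.coeff a.1 (Bfam d (g 0) b.1))) = 1 := by
      ext a b
      have : g 0 = fun i => (MvPolynomial.X i ^ d : MvPolynomial (Fin n) ℝ) := by
        ext1 i; simp [g]
      rw [Matrix.of_apply, this, Bfam_pow, MvPolynomial.coeff_monomial, Matrix.one_apply]
      simp only [Subtype.ext_iff, eq_comm]
    rw [h2, Matrix.det_one] at h1
    exact one_ne_zero h1
  have hcount : (⋃ k, {s : ℝ | (M k).det.eval s = 0}).Countable := by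
    refine Set.countable_iUnion fun k => Set.Finite.countable ?_
    exact Polynomial.finite_setOfPred_isRoot (hne k)
  have hex : ∃ s : ℝ, 1 / δ < s ∧ s ∉ ⋃ k, {s : ℝ | (M k).det.eval s = 0} := by
    by_contra hcon
    push Not at hcon
    have : Set.Ioi (1 / δ) ⊆ ⋃ k, {s : ℝ | (M k).det.eval s = 0} := fun s hs => hcon s hs
    have h0 := (hcount.mono this).measure_zero MeasureTheory.volume
    simp [Real.volume_Ioi] at h0
  obtain ⟨s, hs, hsn⟩ := hex
  have hdet : ∀ k, (Matrix.of (fun a b : ExpLe n k =>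
      MvPolynomial.coeff a.1 (Bfam d (g s) b.1))).det ≠ 0 := by
    intro k h
    rw [hMdet] at h
    exact hsn (Set.mem_iUnion.mpr ⟨k, h⟩)
  have hgdeg : ∀ i, (g s i).totalDegree ≤ d := by
    intro i
    refine (MvPolynomial.totalDegree_add _ _).trans (max_le ?_ ?_)
    · rw [MvPolynomial.totalDegree_X_pow]
    · refine (MvPolynomial.totalDegree_mul _ _).trans ?_
      rw [MvPolynomial.totalDegree_C, zero_add]
      exact hf i
  obtain ⟨x, hx⟩ := real_zero_of_basis d hd (g s) (fam_linearIndependent _ hdet)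
    (fam_span _ (Bfam_totalDegree d _ hgdeg) hdet)
  refine ⟨x, fun i => ?_⟩
  have h := hx i
  simp only [g, map_add, map_mul, map_pow, MvPolynomial.eval_X, MvPolynomial.eval_C] at h
  have hspos : 0 < s := lt_trans (by positivity) hs
  have h1 : s * |MvPolynomial.eval x (f i)| = |x i| ^ d := by
    rw [← abs_pow, show s * |MvPolynomial.eval x (f i)| = |s * MvPolynomial.eval x (f i)| by
      rw [abs_mul, abs_of_pos hspos]]
    rw [show s * MvPolynomial.eval x (f i) = -(x i ^ d) by linarith, abs_neg]
  rw [← h1, ← mul_assoc]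
  have h2 : 1 ≤ δ * s := by
    rw [div_lt_iff₀ hδ] at hs
    linarith
  nlinarith [abs_nonneg (MvPolynomial.eval x (f i))]

theorem sign_approx (R δ : ℝ) (hR : 0 < R) (hδ : 0 < δ) :
    ∃ r : Polynomial ℝ, (∀ s : ℝ, |s| ≤ R → |s * r.eval (s ^ 2)| ≤ 1 + δ) ∧
      (∀ s : ℝ, δ ≤ s → s ≤ R → 1 - δ ≤ s * r.eval (s ^ 2)) := by
  let g : ℝ → ℝ := fun u => 1 / max δ (Real.sqrt u)
  have hg : Continuous g := by
    refine Continuous.div continuous_const (by fun_prop) fun u => ?_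
    exact (lt_of_lt_of_le hδ (le_max_left _ _)).ne'
  obtain ⟨r, hr⟩ := exists_polynomial_near_of_continuousOn 0 (R ^ 2) g hg.continuousOn (δ / R)
    (by positivity)
  have key : ∀ s : ℝ, |s| ≤ R → |s * r.eval (s ^ 2) - s * g (s ^ 2)| ≤ δ := by
    intro s hs
    have h1 := hr (s ^ 2) ⟨by positivity, by rw [← sq_abs s]; gcongr⟩
    rw [← mul_sub, abs_mul]
    calc |s| * |r.eval (s ^ 2) - g (s ^ 2)| ≤ R * (δ / R) := by gcongr
      _ = δ := by field_simp
  have hgs : ∀ s : ℝ, g (s ^ 2) = 1 / max δ |s| := by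
    intro s
    simp only [g, Real.sqrt_sq_eq_abs]
  refine ⟨r, fun s hs => ?_, fun s h1 h2 => ?_⟩
  · have h1 := key s hs
    have h2 : |s * g (s ^ 2)| ≤ 1 := by
      rw [hgs, mul_one_div, abs_div, abs_of_pos (lt_of_lt_of_le hδ (le_max_left δ |s|))]
      exact div_le_one_of_le₀ (le_max_right _ _) (le_trans hδ.le (le_max_left δ |s|))
    calc |s * r.eval (s ^ 2)| = |(s * r.eval (s ^ 2) - s * g (s ^ 2)) + s * g (s ^ 2)| := by ring_nf
      _ ≤ |(s * r.eval (s ^ 2) - s * g (s ^ 2))| + |s * g (s ^ 2)| := abs_add_le _ _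
      _ ≤ 1 + δ := by linarith
  · have hs : 0 < s := lt_of_lt_of_le hδ h1
    have h3 := key s (by rwa [abs_of_pos hs])
    have h4 : s * g (s ^ 2) = 1 := by
      rw [hgs, abs_of_pos hs, max_eq_right h1]
      field_simp
    rw [h4] at h3
    linarith [(abs_le.mp h3).1]

theorem approx_ham {n : ℕ} {X : Type} (lam : X → Fin (n + 1) → ℝ) (S : Fin n → Finset X)
    (r : Polynomial ℝ) (δ : ℝ) (hδ : 0 < δ) :
    ∃ v : Fin (n + 1) → ℝ, ∑ j, v j ^ 2 = 1 ∧
      ∀ i, |∑ x ∈ S i, (∑ j, lam x j * v j) * r.eval ((∑ j, lam x j * v j) ^ 2)| ≤ δ := by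
  classical
  let K := r.natDegree
  let L : X → MvPolynomial (Fin n) ℝ := fun x =>
    MvPolynomial.C (lam x 0) + ∑ j : Fin n, MvPolynomial.C (lam x j.succ) * MvPolynomial.X j
  let Q : MvPolynomial (Fin n) ℝ := 1 + ∑ j : Fin n, MvPolynomial.X j ^ 2
  have hL : ∀ x, (L x).totalDegree ≤ 1 := by
    intro x
    refine (MvPolynomial.totalDegree_add _ _).trans (max_le (by simp) ?_)
    refine MvPolynomial.totalDegree_finsetSum_le fun j _ => ?_
    refine (MvPolynomial.totalDegree_mul _ _).trans (by simp)
  have hQ : Q.totalDegree ≤ 2 := by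
    refine (MvPolynomial.totalDegree_add _ _).trans (max_le (by simp) ?_)
    refine MvPolynomial.totalDegree_finsetSum_le fun j _ => ?_
    rw [MvPolynomial.totalDegree_X_pow]
  let f : Fin n → MvPolynomial (Fin n) ℝ := fun i =>
    ∑ x ∈ S i, ∑ k ∈ Finset.range (K + 1),
      MvPolynomial.C (r.coeff k) * (L x ^ (2 * k + 1) * Q ^ (K - k))
  have hf : ∀ i, (f i).totalDegree ≤ 2 * K + 1 := by
    intro i
    refine MvPolynomial.totalDegree_finsetSum_le fun x _ => ?_
    refine MvPolynomial.totalDegree_finsetSum_le fun k hk => ?_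
    have hk' : k ≤ K := by simpa [Nat.lt_succ_iff] using hk
    refine (MvPolynomial.totalDegree_mul _ _).trans ?_
    rw [MvPolynomial.totalDegree_C, zero_add]
    refine (MvPolynomial.totalDegree_mul _ _).trans ?_
    have h1 : (L x ^ (2 * k + 1)).totalDegree ≤ (2 * k + 1) * 1 :=
      (MvPolynomial.totalDegree_pow _ _).trans (Nat.mul_le_mul_left _ (hL x))
    have h2 : (Q ^ (K - k)).totalDegree ≤ (K - k) * 2 :=
      (MvPolynomial.totalDegree_pow _ _).trans (Nat.mul_le_mul_left _ hQ)
    omega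
  obtain ⟨x, hx⟩ := approx_zero (2 * K + 1) ⟨K, rfl⟩ f hf δ hδ
  let q : ℝ := 1 + ∑ j, x j ^ 2
  have hq : 0 < q := by
    have : 0 ≤ ∑ j, x j ^ 2 := Finset.sum_nonneg fun j _ => sq_nonneg _
    simp only [q]; linarith
  let ρ := Real.sqrt q
  have hρ : 0 < ρ := Real.sqrt_pos.mpr hq
  have hρ2 : ρ ^ 2 = q := Real.sq_sqrt hq.le
  let v : Fin (n + 1) → ℝ := Fin.cons (1 / ρ) fun j => x j / ρ
  have hLv : ∀ y, MvPolynomial.eval x (L y) = ρ * ∑ j, lam y j * v j := by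
    intro y
    simp only [L, map_add, map_sum, map_mul, MvPolynomial.eval_C, MvPolynomial.eval_X, v]
    rw [Fin.sum_univ_succ, mul_add, Finset.mul_sum]
    simp only [Fin.cons_zero, Fin.cons_succ]
    congr 1
    · field_simp
    · refine Finset.sum_congr rfl fun j _ => ?_
      field_simp
  have hQv : MvPolynomial.eval x Q = ρ ^ 2 := by
    rw [hρ2]; simp [Q, q]
  have hfv : ∀ i, MvPolynomial.eval x (f i) = ρ ^ (2 * K + 1) *
      ∑ y ∈ S i, (∑ j, lam y j * v j) * r.eval ((∑ j, lam y j * v j) ^ 2) := by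
    intro i
    simp only [f, map_sum, map_mul, map_pow, MvPolynomial.eval_C, hLv, hQv]
    rw [Finset.mul_sum]
    refine Finset.sum_congr rfl fun y _ => ?_
    generalize ∑ j, lam y j * v j = z
    rw [Polynomial.eval_eq_sum_range, Finset.mul_sum, Finset.mul_sum]
    apply Finset.sum_congr rfl
    intro k hk
    have hk' : k ≤ K := by simpa [Nat.lt_succ_iff] using hk
    obtain ⟨e, he⟩ := Nat.exists_eq_add_of_le hk'
    rw [he, Nat.add_sub_cancel_left]
    ring
  refine ⟨v, ?_, fun i => ?_⟩
  · rw [Fin.sum_univ_succ]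
    simp only [v, Fin.cons_zero, Fin.cons_succ, div_pow, hρ2]
    rw [← Finset.sum_div, ← add_div, one_pow]
    exact div_self hq.ne'
  · have h1 := hx i
    rw [hfv, abs_mul, abs_of_pos (pow_pos hρ _)] at h1
    have h2 : |x i| ≤ ρ := by
      apply Real.abs_le_sqrt
      have : x i ^ 2 ≤ ∑ j, x j ^ 2 :=
        Finset.single_le_sum (f := fun j => x j ^ 2) (fun j _ => sq_nonneg _) (Finset.mem_univ i)
      simp only [q]; linarith
    have h3 : |x i| ^ (2 * K + 1) ≤ ρ ^ (2 * K + 1) := by gcongr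
    have h4 : 0 < ρ ^ (2 * K + 1) := pow_pos hρ _
    by_contra hcon
    push Not at hcon
    have := mul_lt_mul_of_pos_left hcon h4
    nlinarith

/-- One half of the bisection: no strict majority on the positive side. -/
theorem ham_half {X : Type} {n : ℕ} (lam : X → Fin n → ℝ) (S : Finset X) (R : ℝ)
    (v : Fin n → ℝ) (w : ℕ → Fin n → ℝ) (hw : Filter.Tendsto w Filter.atTop (nhds v))
    (r : ℕ → Polynomial ℝ) (δ : ℕ → ℝ) (hδ : Filter.Tendsto δ Filter.atTop (nhds 0))
    (hδ0 : ∀ k, 0 < δ k)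
    (hR : ∀ k, ∀ x ∈ S, |∑ j, lam x j * w k j| ≤ R)
    (h1 : ∀ k, ∀ s : ℝ, |s| ≤ R → |s * (r k).eval (s ^ 2)| ≤ 1 + δ k)
    (h2 : ∀ k, ∀ s : ℝ, δ k ≤ s → s ≤ R → 1 - δ k ≤ s * (r k).eval (s ^ 2))
    (h3 : ∀ k, |∑ x ∈ S, (∑ j, lam x j * w k j) * (r k).eval ((∑ j, lam x j * w k j) ^ 2)|
      ≤ δ k) :
    2 * (S.filter fun x => 0 < ∑ j, lam x j * v j).card ≤ S.card := by
  classical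
  by_contra hcon
  push Not at hcon
  let T := S.filter fun x => 0 < ∑ j, lam x j * v j
  have hev : ∀ᶠ k in Filter.atTop, ∀ x ∈ T, δ k < ∑ j, lam x j * w k j := by
    rw [Filter.eventually_all_finset]
    intro x hx
    have hpos : 0 < ∑ j, lam x j * v j := (Finset.mem_filter.mp hx).2
    have ht : Filter.Tendsto (fun k => ∑ j, lam x j * w k j) Filter.atTop
        (nhds (∑ j, lam x j * v j)) := by
      refine tendsto_finsetSum _ fun j _ => ?_
      exact ((tendsto_pi_nhds.mp hw) j).const_mul _
    exact hδ.eventually_lt ht hpos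
  have hev2 : ∀ᶠ k in Filter.atTop, δ k < 1 / ((S.card : ℝ) + 1) :=
    hδ.eventually_lt tendsto_const_nhds (by positivity)
  obtain ⟨k, hk1, hk2⟩ := (hev.and hev2).exists
  let F : X → ℝ := fun x => (∑ j, lam x j * w k j) * (r k).eval ((∑ j, lam x j * w k j) ^ 2)
  have hsplit : ∑ x ∈ S, F x = ∑ x ∈ T, F x + ∑ x ∈ S.filter (fun x => ¬ 0 < ∑ j, lam x j * v j), F x :=
    (Finset.sum_filter_add_sum_filter_not S _ F).symm
  have hA : (T.card : ℝ) * (1 - δ k) ≤ ∑ x ∈ T, F x := by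
    rw [← nsmul_eq_mul]
    refine Finset.card_nsmul_le_sum _ _ _ fun x hx => ?_
    refine h2 k _ (hk1 x hx).le ?_
    exact (le_abs_self _).trans (hR k x (Finset.mem_of_mem_filter x hx))
  have hB : ((S.filter (fun x => ¬ 0 < ∑ j, lam x j * v j)).card : ℝ) * (-(1 + δ k)) ≤
      ∑ x ∈ S.filter (fun x => ¬ 0 < ∑ j, lam x j * v j), F x := by
    rw [← nsmul_eq_mul]
    refine Finset.card_nsmul_le_sum _ _ _ fun x hx => ?_
    exact (abs_le.mp (h1 k _ (hR k x (Finset.mem_of_mem_filter x hx)))).1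
  have hC : (T.card : ℝ) + ((S.filter (fun x => ¬ 0 < ∑ j, lam x j * v j)).card : ℝ) = S.card := by
    exact_mod_cast Finset.card_filter_add_card_filter_not (s := S) (fun x => 0 < ∑ j, lam x j * v j)
  have hD : (S.card : ℝ) + 1 ≤ 2 * T.card := by exact_mod_cast hcon
  have hE := (abs_le.mp (h3 k)).2
  change ∑ x ∈ S, F x ≤ δ k at hE
  rw [hsplit] at hE
  rw [lt_div_iff₀ (by positivity)] at hk2
  have := hδ0 k
  nlinarith

theorem ham_sandwich {n : ℕ} {X : Type} (lam : X → Fin (n + 1) → ℝ) (S : Fin n → Finset X) :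
    ∃ v : Fin (n + 1) → ℝ, v ≠ 0 ∧ ∀ i,
      2 * ((S i).filter fun x => 0 < ∑ j, lam x j * v j).card ≤ (S i).card ∧
      2 * ((S i).filter fun x => ∑ j, lam x j * v j < 0).card ≤ (S i).card := by
  classical
  let U : Finset X := Finset.univ.biUnion S
  let R : ℝ := ∑ x ∈ U, ∑ j, |lam x j| + 1
  have hRpos : 0 < R := by
    have : 0 ≤ ∑ x ∈ U, ∑ j, |lam x j| :=
      Finset.sum_nonneg fun x _ => Finset.sum_nonneg fun j _ => abs_nonneg _
    simp only [R]; linarith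
  have hbound : ∀ v : Fin (n + 1) → ℝ, ∑ j, v j ^ 2 = 1 → ∀ i, ∀ x ∈ S i,
      |∑ j, lam x j * v j| ≤ R := by
    intro v hv i x hx
    have hxU : x ∈ U := Finset.mem_biUnion.mpr ⟨i, Finset.mem_univ _, hx⟩
    have hv1 : ∀ j, |v j| ≤ 1 := by
      intro j
      rw [← sq_le_one_iff_abs_le_one, ← hv]
      exact Finset.single_le_sum (f := fun j => v j ^ 2) (fun j _ => sq_nonneg _) (Finset.mem_univ j)
    calc |∑ j, lam x j * v j| ≤ ∑ j, |lam x j * v j| := Finset.abs_sum_le_sum_abs _ _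
      _ ≤ ∑ j, |lam x j| := Finset.sum_le_sum fun j _ => by
          rw [abs_mul]
          exact mul_le_of_le_one_right (abs_nonneg _) (hv1 j)
      _ ≤ ∑ x ∈ U, ∑ j, |lam x j| :=
          Finset.single_le_sum (f := fun x => ∑ j, |lam x j|)
            (fun x _ => Finset.sum_nonneg fun j _ => abs_nonneg _) hxU
      _ ≤ R := by simp only [R]; linarith
  let δ : ℕ → ℝ := fun k => 1 / ((k : ℝ) + 1)
  have hδ0 : ∀ k, 0 < δ k := fun k => by simp only [δ]; positivity
  have hδ : Filter.Tendsto δ Filter.atTop (nhds 0) := tendsto_one_div_add_atTop_nhds_zero_nat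
  choose r hr1 hr2 using fun k => sign_approx R (δ k) hRpos (hδ0 k)
  choose w hw1 hw2 using fun k => approx_ham lam S (r k) (δ k) (hδ0 k)
  have hcpt : IsCompact {v : Fin (n + 1) → ℝ | ∑ j, v j ^ 2 = 1} := by
    refine (isCompact_closedBall (0 : Fin (n + 1) → ℝ) 1).of_isClosed_subset ?_ ?_
    · exact isClosed_eq (by fun_prop) continuous_const
    · intro v hv
      rw [mem_closedBall_zero_iff, pi_norm_le_iff_of_nonneg zero_le_one]
      intro j
      rw [Real.norm_eq_abs, ← sq_le_one_iff_abs_le_one]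
      have hv' : ∑ j, v j ^ 2 = 1 := hv
      rw [← hv']
      exact Finset.single_le_sum (f := fun j => v j ^ 2) (fun j _ => sq_nonneg _) (Finset.mem_univ j)
  obtain ⟨v, hv, φ, hφ, hlim⟩ := hcpt.tendsto_subseq hw1
  have hv' : ∑ j, v j ^ 2 = 1 := hv
  refine ⟨v, ?_, fun i => ⟨?_, ?_⟩⟩
  · rintro rfl
    simp at hv'
  · exact ham_half lam (S i) R v (w ∘ φ) hlim (r ∘ φ) (δ ∘ φ) (hδ.comp hφ.tendsto_atTop)
      (fun k => hδ0 _) (fun k x hx => hbound _ (hw1 _) i x hx) (fun k => hr1 _) (fun k => hr2 _)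
      (fun k => hw2 _ i)
  · have := ham_half lam (S i) R (-v) (fun k => - w (φ k)) hlim.neg (r ∘ φ) (δ ∘ φ)
      (hδ.comp hφ.tendsto_atTop)
      (fun k => hδ0 _) (fun k x hx => by
        have := hbound _ (hw1 (φ k)) i x hx
        simpa using this) (fun k => hr1 _) (fun k => hr2 _)
      (fun k => by
        have := hw2 (φ k) i
        simpa using this)
    simpa using this

theorem poly_bisect {d : ℕ} {X : Type} (pt : X → Fin d → ℝ) (e n : ℕ) (h : n < e ^ d)
    (S : Fin n → Finset X) :
    ∃ f : MvPolynomial (Fin d) ℝ, f ≠ 0 ∧ f.totalDegree ≤ d * e ∧ ∀ i,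
      2 * ((S i).filter fun x => 0 < MvPolynomial.eval (pt x) f).card ≤ (S i).card ∧
      2 * ((S i).filter fun x => MvPolynomial.eval (pt x) f < 0).card ≤ (S i).card := by
  classical
  have hcard : Fintype.card (Fin (n + 1)) ≤ Fintype.card (Fin d → Fin e) := by
    simpa using h
  obtain ⟨emb⟩ := Function.Embedding.nonempty_of_card_le hcard
  let ι : Fin (n + 1) → (Fin d →₀ ℕ) := fun j =>
    Finsupp.equivFunOnFinite.symm fun i => (emb j i : ℕ)
  have hι : Function.Injective ι := by
    intro a b hab
    apply emb.injective
    ext i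
    have := DFunLike.congr_fun hab i
    simpa [ι] using this
  let lam : X → Fin (n + 1) → ℝ := fun x j => ∏ i, pt x i ^ (emb j i : ℕ)
  obtain ⟨v, hv, hS⟩ := ham_sandwich lam S
  let f : MvPolynomial (Fin d) ℝ := ∑ j, MvPolynomial.monomial (ι j) (v j)
  have hev : ∀ x, MvPolynomial.eval (pt x) f = ∑ j, lam x j * v j := by
    intro x
    simp only [f, map_sum, MvPolynomial.eval_monomial]
    refine Finset.sum_congr rfl fun j _ => ?_
    rw [mul_comm, Finsupp.prod_fintype _ _ (by simp)]
    simp [lam, ι]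
  refine ⟨f, ?_, ?_, ?_⟩
  · intro hf
    apply hv
    ext j
    have : MvPolynomial.coeff (ι j) f = v j := by
      simp only [f, MvPolynomial.coeff_sum, MvPolynomial.coeff_monomial]
      rw [Finset.sum_eq_single j]
      · simp
      · intro b _ hb
        rw [if_neg (fun h => hb (hι h))]
      · simp
    rw [← this, hf]
    simp
  · refine MvPolynomial.totalDegree_finsetSum_le fun j _ => ?_
    refine (MvPolynomial.totalDegree_monomial_le _ _).trans ?_
    rw [Finsupp.sum_fintype _ _ (by simp)]
    calc ∑ i, (ι j) i ≤ ∑ i : Fin d, e := Finset.sum_le_sum fun i _ => by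
          simp only [ι, Finsupp.equivFunOnFinite_symm_apply_apply]
          exact (emb j i).2.le
      _ = d * e := by simp
  · simpa only [hev] using hS

/-- The point `y` lies in the sign cell `s` of the polynomials `g 0, …, g (J-1)`. -/
def InCell {d : ℕ} (g : ℕ → MvPolynomial (Fin d) ℝ) (J : ℕ) (s : Finset ℕ) (y : Fin d → ℝ) : Prop :=
  ∀ j < J, (j ∈ s → 0 < MvPolynomial.eval y (g j)) ∧ (j ∉ s → MvPolynomial.eval y (g j) < 0)

open Classical in
theorem poly_partition {d : ℕ} (hd : 0 < d) {X : Type} (pt : X → Fin d → ℝ) (P : Finset X) (J : ℕ) :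
    ∃ g : ℕ → MvPolynomial (Fin d) ℝ,
      (∀ j < J, g j ≠ 0 ∧ (g j).totalDegree ≤ d * 2 ^ (j / d + 1)) ∧
      ∀ s ⊆ Finset.range J, (P.filter fun x => InCell g J s (pt x)).card * 2 ^ J ≤ P.card := by
  induction J with
  | zero =>
    refine ⟨fun _ => 0, by simp, fun s _ => ?_⟩
    rw [pow_zero, mul_one]
    exact Finset.card_filter_le _ _
  | succ J ih =>
    obtain ⟨g, hg, hcell⟩ := ih
    have hc : ((Finset.range J).powerset).card = 2 ^ J := by simp
    let eq : Fin (2 ^ J) ≃ ((Finset.range J).powerset) := (Finset.equivFinOfCardEq hc).symm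
    have hlt : 2 ^ J < (2 ^ (J / d + 1)) ^ d := by
      rw [← pow_mul]
      apply Nat.pow_lt_pow_right (by norm_num)
      have := Nat.lt_div_mul_add (a := J) hd
      rw [add_mul, one_mul]
      exact this
    obtain ⟨f, hf0, hfd, hf⟩ := poly_bisect pt (2 ^ (J / d + 1)) (2 ^ J) hlt
      (fun i => P.filter fun x => InCell g J (eq i).1 (pt x))
    have hold : ∀ j < J, Function.update g J f j = g j := fun j hj =>
      Function.update_of_ne hj.ne _ _
    refine ⟨Function.update g J f, ?_, ?_⟩
    · intro j hj
      rcases Nat.lt_succ_iff_lt_or_eq.mp hj with h | rfl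
      · rw [hold j h]; exact hg j h
      · rw [Function.update_self]; exact ⟨hf0, hfd⟩
    · intro s hs
      let s' := s.erase J
      have hs' : s' ⊆ Finset.range J := by
        intro j hj
        have h1 := Finset.mem_erase.mp hj
        have h2 := Finset.mem_range.mp (hs h1.2)
        exact Finset.mem_range.mpr (by omega)
      let i := eq.symm ⟨s', Finset.mem_powerset.mpr hs'⟩
      have hi : (eq i).1 = s' := by simp [i]
      have hfi := hf i
      rw [hi] at hfi
      have hsub : ∀ x, InCell (Function.update g J f) (J + 1) s (pt x) → InCell g J s' (pt x) := by
        intro x hx j hj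
        have := hx j (by omega)
        rw [hold j hj] at this
        have hjs : j ∈ s' ↔ j ∈ s := by
          simp [s', hj.ne]
        rw [hjs]
        exact this
      have h2 : 2 * (P.filter fun x => InCell (Function.update g J f) (J + 1) s (pt x)).card ≤
          (P.filter fun x => InCell g J s' (pt x)).card := by
        by_cases hJ : J ∈ s
        · refine le_trans (Nat.mul_le_mul_left 2 (Finset.card_le_card ?_)) hfi.1
          intro x hx
          rw [Finset.mem_filter] at hx
          rw [Finset.mem_filter, Finset.mem_filter]
          refine ⟨⟨hx.1, hsub x hx.2⟩, ?_⟩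
          have := (hx.2 J (by omega)).1 hJ
          rwa [Function.update_self] at this
        · refine le_trans (Nat.mul_le_mul_left 2 (Finset.card_le_card ?_)) hfi.2
          intro x hx
          rw [Finset.mem_filter] at hx
          rw [Finset.mem_filter, Finset.mem_filter]
          refine ⟨⟨hx.1, hsub x hx.2⟩, ?_⟩
          have := (hx.2 J (by omega)).2 hJ
          rwa [Function.update_self] at this
      have h3 := hcell s' hs'
      calc _ = (2 * (P.filter fun x => InCell (Function.update g J f) (J + 1) s (pt x)).card) * 2 ^ J := by
            rw [pow_succ]; ring
        _ ≤ _ := Nat.mul_le_mul_right _ h2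
        _ ≤ _ := h3

theorem degree_sum_bound (d M : ℕ) (hd : 0 < d) :
    ∑ j ∈ Finset.range (d * M), d * 2 ^ (j / d + 1) ≤ 2 * d ^ 2 * 2 ^ M := by
  induction M with
  | zero => simp
  | succ M ih =>
    rw [Nat.mul_succ, Finset.sum_range_add]
    have : ∀ x ∈ Finset.range d, d * 2 ^ ((d * M + x) / d + 1) = d * 2 ^ (M + 1) := by
      intro x hx
      rw [Nat.mul_add_div hd, Nat.div_eq_of_lt (Finset.mem_range.mp hx), add_zero]
    rw [Finset.sum_congr rfl this, Finset.sum_const, Finset.card_range, smul_eq_mul]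
    have h2 : 2 ^ (M + 1) = 2 * 2 ^ M := by ring
    rw [h2]
    nlinarith

open Classical in
/-- Polynomial partitioning with sign cells. -/
theorem poly_partition' {d : ℕ} (hd : 0 < d) {X : Type} (pt : X → Fin d → ℝ) (P : Finset X) (M : ℕ) :
    ∃ g : ℕ → MvPolynomial (Fin d) ℝ,
      (∀ j < d * M, g j ≠ 0) ∧
      ∑ j ∈ Finset.range (d * M), (g j).totalDegree ≤ 2 * d ^ 2 * 2 ^ M ∧
      ∀ s ⊆ Finset.range (d * M),
        (P.filter fun x => InCell g (d * M) s (pt x)).card * 2 ^ (d * M) ≤ P.card := by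
  obtain ⟨g, h1, h2⟩ := poly_partition hd pt P (d * M)
  refine ⟨g, fun j hj => (h1 j hj).1, ?_, h2⟩
  refine le_trans (Finset.sum_le_sum fun j hj => ?_) (degree_sum_bound d M hd)
  exact (h1 j (Finset.mem_range.mp hj)).2

/-- A circle written through an orthogonal frame. -/
def IsFrame (γ : Set (Fin 3 → ℝ)) (c U W : Fin 3 → ℝ) (ρ : ℝ) : Prop :=
  0 < ρ ∧ ∑ i, U i ^ 2 = ρ ^ 2 ∧ ∑ i, W i ^ 2 = ρ ^ 2 ∧ ∑ i, U i * W i = 0 ∧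
    γ = {x | ∃ a b : ℝ, a ^ 2 + b ^ 2 = 1 ∧ ∀ i, x i = c i + a * U i + b * W i}

theorem exists_perp (v : Fin 3 → ℝ) (hv : v ≠ 0) :
    ∃ u : Fin 3 → ℝ, 0 < ∑ i, u i ^ 2 ∧ ∑ i, v i * u i = 0 := by
  by_cases h : v 0 = 0 ∧ v 1 = 0
  · refine ⟨![1, 0, 0], ?_, ?_⟩
    · simp [Fin.sum_univ_three]
    · simp [Fin.sum_univ_three, h.1]
  · refine ⟨![-v 1, v 0, 0], ?_, ?_⟩
    · simp [Fin.sum_univ_three]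
      by_contra hcon
      apply h
      constructor <;> nlinarith [sq_nonneg (v 0), sq_nonneg (v 1)]
    · simp [Fin.sum_univ_three]
      ring

theorem circle_frame {γ : Set (Fin 3 → ℝ)} (h : IsCircle γ) : ∃ c U W ρ, IsFrame γ c U W ρ := by
  obtain ⟨c, v, ρ, hρ, hv, rfl⟩ := h
  obtain ⟨u, hu, huv⟩ := exists_perp v hv
  have hV : 0 < ∑ i, v i ^ 2 := by
    obtain ⟨i, hi⟩ := Function.ne_iff.mp hv
    have hi' : v i ≠ 0 := hi
    refine lt_of_lt_of_le (by positivity : 0 < v i ^ 2) ?_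
    exact Finset.single_le_sum (f := fun j => v j ^ 2) (fun j _ => sq_nonneg _) (Finset.mem_univ i)
  let w : Fin 3 → ℝ := ![v 1 * u 2 - v 2 * u 1, v 2 * u 0 - v 0 * u 2, v 0 * u 1 - v 1 * u 0]
  have hw0 : w 0 = v 1 * u 2 - v 2 * u 1 := rfl
  have hw1 : w 1 = v 2 * u 0 - v 0 * u 2 := rfl
  have hw2 : w 2 = v 0 * u 1 - v 1 * u 0 := rfl
  simp only [Fin.sum_univ_three] at hu hV huv
  set N := u 0 ^ 2 + u 1 ^ 2 + u 2 ^ 2 with hN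
  set V := v 0 ^ 2 + v 1 ^ 2 + v 2 ^ 2 with hVd
  have hww : w 0 ^ 2 + w 1 ^ 2 + w 2 ^ 2 = V * N := by
    rw [hw0, hw1, hw2, hN, hVd]
    linear_combination (-(v 0 * u 0 + v 1 * u 1 + v 2 * u 2)) * huv
  have hwu : u 0 * w 0 + u 1 * w 1 + u 2 * w 2 = 0 := by
    rw [hw0, hw1, hw2]; ring
  have hwv : v 0 * w 0 + v 1 * w 1 + v 2 * w 2 = 0 := by
    rw [hw0, hw1, hw2]; ring
  have key : ∀ y : Fin 3 → ℝ, v 0 * y 0 + v 1 * y 1 + v 2 * y 2 = 0 → ∀ i,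
      V * N * y i = V * (u 0 * y 0 + u 1 * y 1 + u 2 * y 2) * u i
        + (w 0 * y 0 + w 1 * y 1 + w 2 * y 2) * w i := by
    intro y hy i
    have huvi : v 0 * u 0 + v 1 * u 1 + v 2 * u 2 = 0 := huv
    have e : V * N * y i = V * (u 0 * y 0 + u 1 * y 1 + u 2 * y 2) * u i
        + (w 0 * y 0 + w 1 * y 1 + w 2 * y 2) * w i
        + N * (v 0 * y 0 + v 1 * y 1 + v 2 * y 2) * v i
        + (v 0 * u 0 + v 1 * u 1 + v 2 * u 2) *
          ((v 0 * u 0 + v 1 * u 1 + v 2 * u 2) * y i - (u 0 * y 0 + u 1 * y 1 + u 2 * y 2) * v i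
            - (v 0 * y 0 + v 1 * y 1 + v 2 * y 2) * u i) := by
      fin_cases i <;> simp only [Fin.zero_eta, Fin.mk_one, Fin.reduceFinMk, hw0, hw1, hw2, hN, hVd] <;> ring
    rw [e, huvi, hy]
    ring
  set n1 := Real.sqrt N with hn1
  set n2 := Real.sqrt (V * N) with hn2
  have hVN : 0 < V * N := mul_pos hV hu
  have hn1p : 0 < n1 := Real.sqrt_pos.mpr hu
  have hn2p : 0 < n2 := Real.sqrt_pos.mpr hVN
  have hn1s : n1 ^ 2 = N := Real.sq_sqrt hu.le
  have hn2s : n2 ^ 2 = V * N := Real.sq_sqrt hVN.le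
  refine ⟨c, fun i => ρ / n1 * u i, fun i => ρ / n2 * w i, ρ, hρ, ?_, ?_, ?_, ?_⟩
  · simp only [Fin.sum_univ_three]
    have : (ρ / n1 * u 0) ^ 2 + (ρ / n1 * u 1) ^ 2 + (ρ / n1 * u 2) ^ 2 = ρ ^ 2 * (N / n1 ^ 2) := by
      rw [hN]; field_simp
    rw [this, hn1s, div_self hu.ne', mul_one]
  · simp only [Fin.sum_univ_three]
    have : (ρ / n2 * w 0) ^ 2 + (ρ / n2 * w 1) ^ 2 + (ρ / n2 * w 2) ^ 2
        = ρ ^ 2 * ((w 0 ^ 2 + w 1 ^ 2 + w 2 ^ 2) / n2 ^ 2) := by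
      field_simp
    rw [this, hww, hn2s, div_self hVN.ne', mul_one]
  · simp only [Fin.sum_univ_three]
    linear_combination (ρ / n1 * (ρ / n2)) * hwu
  · ext x
    simp only [Set.mem_setOf_eq, Fin.sum_univ_three]
    constructor
    · rintro ⟨h1, h2⟩
      have hk := key (fun i => x i - c i) h2
      set A := u 0 * (x 0 - c 0) + u 1 * (x 1 - c 1) + u 2 * (x 2 - c 2) with hA
      set B := w 0 * (x 0 - c 0) + w 1 * (x 1 - c 1) + w 2 * (x 2 - c 2) with hB
      refine ⟨A / (n1 * ρ), B / (n2 * ρ), ?_, fun i => ?_⟩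
      · have hsum : V * N * ((x 0 - c 0) ^ 2 + (x 1 - c 1) ^ 2 + (x 2 - c 2) ^ 2)
            = V * A ^ 2 + B ^ 2 := by
          rw [hA, hB]
          linear_combination (x 0 - c 0) * hk 0 + (x 1 - c 1) * hk 1 + (x 2 - c 2) * hk 2
        rw [h1] at hsum
        rw [div_pow, div_pow, mul_pow, mul_pow, hn1s, hn2s]
        field_simp
        linarith
      · have : A / (n1 * ρ) * (ρ / n1 * u i) + B / (n2 * ρ) * (ρ / n2 * w i)
            = A * u i / n1 ^ 2 + B * w i / n2 ^ 2 := by field_simp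
        have h3 : A * u i / n1 ^ 2 + B * w i / n2 ^ 2 = x i - c i := by
          rw [hn1s, hn2s]
          field_simp
          linarith [hk i]
        linarith
    · rintro ⟨a, b, hab, hx⟩
      have hy : ∀ i, x i - c i = a * (ρ / n1 * u i) + b * (ρ / n2 * w i) := fun i => by
        rw [hx i]; ring
      rw [hy 0, hy 1, hy 2]
      constructor
      · have e : (a * (ρ / n1 * u 0) + b * (ρ / n2 * w 0)) ^ 2
          + (a * (ρ / n1 * u 1) + b * (ρ / n2 * w 1)) ^ 2
          + (a * (ρ / n1 * u 2) + b * (ρ / n2 * w 2)) ^ 2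
          = a ^ 2 * ρ ^ 2 * (N / n1 ^ 2) + b ^ 2 * ρ ^ 2 * ((w 0 ^ 2 + w 1 ^ 2 + w 2 ^ 2) / n2 ^ 2)
            + 2 * a * b * (ρ / n1) * (ρ / n2) * (u 0 * w 0 + u 1 * w 1 + u 2 * w 2) := by
          rw [hN]; field_simp; ring
        rw [e, hww, hwu, hn1s, hn2s, div_self hu.ne', div_self hVN.ne']
        linear_combination ρ ^ 2 * hab
      · linear_combination a * (ρ / n1) * huv + b * (ρ / n2) * hwv

/-- Rational parametrization of a framed circle. -/
def circ (c U W : Fin 3 → ℝ) (t : ℝ) : Fin 3 → ℝ := fun i =>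
  c i + ((1 - t ^ 2) / (1 + t ^ 2)) * U i + (2 * t / (1 + t ^ 2)) * W i

theorem circ_mem {γ c U W ρ} (h : IsFrame γ c U W ρ) (t : ℝ) : circ c U W t ∈ γ := by
  rw [h.2.2.2.2]
  refine ⟨_, _, ?_, fun i => rfl⟩
  have : 0 < 1 + t ^ 2 := by positivity
  field_simp
  ring

theorem circ_surj {γ c U W ρ} (h : IsFrame γ c U W ρ) {x} (hx : x ∈ γ) :
    x = (fun i => c i - U i) ∨ ∃ t, x = circ c U W t := by
  rw [h.2.2.2.2] at hx
  obtain ⟨a, b, hab, hx⟩ := hx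
  by_cases ha : a = -1
  · left
    have hb : b = 0 := by
      rw [ha] at hab
      nlinarith
    ext i
    rw [hx i, ha, hb]
    ring
  · right
    have ha' : 1 + a ≠ 0 := fun h => ha (by linarith)
    refine ⟨b / (1 + a), ?_⟩
    have e1 : 1 + (b / (1 + a)) ^ 2 = 2 / (1 + a) := by
      field_simp
      linear_combination hab
    ext i
    rw [hx i, circ, e1]
    have e2 : (1 - (b / (1 + a)) ^ 2) / (2 / (1 + a)) = a := by
      have : 1 - (b / (1 + a)) ^ 2 = 2 - 2 / (1 + a) := by linarith
      rw [this]
      field_simp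
      ring
    have e3 : 2 * (b / (1 + a)) / (2 / (1 + a)) = b := by
      field_simp
    rw [e2, e3]

theorem circ_poly (c U W : Fin 3 → ℝ) (f : MvPolynomial (Fin 3) ℝ) (D : ℕ)
    (hD : f.totalDegree ≤ D) :
    ∃ q : Polynomial ℝ, q.natDegree ≤ 2 * D ∧
      ∀ t, q.eval t = (1 + t ^ 2) ^ D * MvPolynomial.eval (circ c U W t) f := by
  let Q : Polynomial ℝ := 1 + Polynomial.X ^ 2
  let N : Fin 3 → Polynomial ℝ := fun i =>
    Polynomial.C (c i) * (1 + Polynomial.X ^ 2) + Polynomial.C (U i) * (1 - Polynomial.X ^ 2)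
      + Polynomial.C (2 * W i) * Polynomial.X
  have hQ : Q.natDegree ≤ 2 := by simp only [Q]; compute_degree
  have hN : ∀ i, (N i).natDegree ≤ 2 := by
    intro i; simp only [N]; compute_degree
  refine ⟨∑ m ∈ f.support, Polynomial.C (f.coeff m) * ((∏ i, N i ^ m i) * Q ^ (D - m.degree)), ?_, ?_⟩
  · refine Polynomial.natDegree_sum_le_of_forall_le _ _ fun m hm => ?_
    have hmD : m.degree ≤ D := by
      refine le_trans ?_ hD
      have := MvPolynomial.le_totalDegree hm
      simpa [Finsupp.degree_apply, Finsupp.sum] using this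
    refine (Polynomial.natDegree_C_mul_le _ _).trans ?_
    refine Polynomial.natDegree_mul_le.trans ?_
    have h1 : (∏ i, N i ^ m i).natDegree ≤ 2 * m.degree := by
      rw [Finsupp.degree_eq_sum, Finset.mul_sum]
      refine (Polynomial.natDegree_prod_le _ _).trans (Finset.sum_le_sum fun i _ => ?_)
      refine Polynomial.natDegree_pow_le.trans ?_
      rw [mul_comm]
      exact Nat.mul_le_mul_right _ (hN i)
    have h2 : (Q ^ (D - m.degree)).natDegree ≤ (D - m.degree) * 2 :=
      Polynomial.natDegree_pow_le.trans (Nat.mul_le_mul_left _ hQ)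
    omega
  · intro t
    rw [Polynomial.eval_finset_sum, MvPolynomial.eval_eq', Finset.mul_sum]
    refine Finset.sum_congr rfl fun m hm => ?_
    have hmD : m.degree ≤ D := by
      refine le_trans ?_ hD
      have := MvPolynomial.le_totalDegree hm
      simpa [Finsupp.degree_apply, Finsupp.sum] using this
    obtain ⟨e, he⟩ := Nat.exists_eq_add_of_le hmD
    have hpos : 0 < 1 + t ^ 2 := by positivity
    have hNe : ∀ i, (N i).eval t = (1 + t ^ 2) * circ c U W t i := by
      intro i
      simp [N, circ]
      field_simp
    have hprod : ∏ i, ((1 + t ^ 2) * circ c U W t i) ^ m i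
        = (1 + t ^ 2) ^ m.degree * ∏ i, circ c U W t i ^ m i := by
      simp only [mul_pow]
      rw [Finset.prod_mul_distrib, Finset.prod_pow_eq_pow_sum, Finsupp.degree_eq_sum]
    rw [Polynomial.eval_mul, Polynomial.eval_C, Polynomial.eval_mul, Polynomial.eval_prod]
    simp only [Polynomial.eval_pow, hNe]
    have hQe : Q.eval t = 1 + t ^ 2 := by simp [Q]
    rw [hprod, hQe, he, Nat.add_sub_cancel_left]
    ring

theorem circ_vanish {γ c U W ρ} (h : IsFrame γ c U W ρ) (f : MvPolynomial (Fin 3) ℝ)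
    (hf : ∀ t, MvPolynomial.eval (circ c U W t) f = 0) : γ ⊆ zeroSet f := by
  intro x hx
  rcases circ_surj h hx with rfl | ⟨t, rfl⟩
  · let ψ : ℝ → Fin 3 → ℝ := fun s i =>
      c i + ((s ^ 2 - 1) / (1 + s ^ 2)) * U i + (2 * s / (1 + s ^ 2)) * W i
    have hψ : Continuous ψ := by
      refine continuous_pi fun i => ?_
      have : ∀ s : ℝ, 1 + s ^ 2 ≠ 0 := fun s => by positivity
      simp only [ψ]
      fun_prop (disch := assumption)
    have hc : Continuous fun s => MvPolynomial.eval (ψ s) f :=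
      (MvPolynomial.continuous_eval f).comp hψ
    have heq : (fun s => MvPolynomial.eval (ψ s) f) = fun _ => 0 := by
      refine Continuous.ext_on (dense_compl_singleton (0 : ℝ)) hc continuous_const ?_
      intro s hs
      have hs0 : s ≠ 0 := hs
      have : ψ s = circ c U W (1 / s) := by
        ext i
        simp only [ψ, circ]
        have h1 : (s ^ 2 - 1) / (1 + s ^ 2) = (1 - (1 / s) ^ 2) / (1 + (1 / s) ^ 2) := by
          have : 1 + s ^ 2 ≠ 0 := by positivity
          have : s ^ 2 + 1 ≠ 0 := by positivity
          field_simp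
          ring
        have h2 : 2 * s / (1 + s ^ 2) = 2 * (1 / s) / (1 + (1 / s) ^ 2) := by
          have : 1 + s ^ 2 ≠ 0 := by positivity
          have : s ^ 2 + 1 ≠ 0 := by positivity
          field_simp
          ring
        rw [h1, h2]
      simp only [this, hf]
    have h0 := congrFun heq 0
    have h0 : MvPolynomial.eval (ψ 0) f = 0 := h0
    change MvPolynomial.eval _ f = 0
    rw [← h0]
    congr 1
    congr 1
    ext i
    simp [ψ]
    ring
  · exact hf t

theorem circ_continuous (c U W : Fin 3 → ℝ) : Continuous (circ c U W) := by
  refine continuous_pi fun i => ?_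
  have : ∀ s : ℝ, 1 + s ^ 2 ≠ 0 := fun s => by positivity
  simp only [circ]
  fun_prop (disch := assumption)

theorem circ_poly_ne {γ c U W ρ} (h : IsFrame γ c U W ρ) (f : MvPolynomial (Fin 3) ℝ) (D : ℕ)
    (hD : f.totalDegree ≤ D) (hf : ¬ γ ⊆ zeroSet f) :
    ∃ q : Polynomial ℝ, q ≠ 0 ∧ q.natDegree ≤ 2 * D ∧
      ∀ t, q.eval t = 0 ↔ MvPolynomial.eval (circ c U W t) f = 0 := by
  obtain ⟨q, hq, he⟩ := circ_poly c U W f D hD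
  have hiff : ∀ t, q.eval t = 0 ↔ MvPolynomial.eval (circ c U W t) f = 0 := by
    intro t
    have : (1 + t ^ 2) ^ D ≠ 0 := by positivity
    rw [he, mul_eq_zero]
    simp [this]
  refine ⟨q, ?_, hq, hiff⟩
  rintro rfl
  exact hf (circ_vanish h f fun t => (hiff t).1 (by simp))

theorem circle_mul {γ : Set (Fin 3 → ℝ)} (hγ : IsCircle γ) (f h : MvPolynomial (Fin 3) ℝ)
    (hfh : γ ⊆ zeroSet (f * h)) : γ ⊆ zeroSet f ∨ γ ⊆ zeroSet h := by
  obtain ⟨c, U, W, ρ, hF⟩ := circle_frame hγ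
  by_contra hcon
  push Not at hcon
  obtain ⟨q, hq, -, hqe⟩ := circ_poly_ne hF f _ le_rfl hcon.1
  obtain ⟨r, hr, -, hre⟩ := circ_poly_ne hF h _ le_rfl hcon.2
  apply mul_ne_zero hq hr
  refine Polynomial.funext fun t => ?_
  have := hfh (circ_mem hF t)
  rw [zeroSet, Set.mem_ofPred_eq, map_mul, mul_eq_zero] at this
  rw [Polynomial.eval_mul, Polynomial.eval_zero, mul_eq_zero, hqe, hre]
  exact this

theorem circle_zero_count {γ : Set (Fin 3 → ℝ)} (hγ : IsCircle γ) (f : MvPolynomial (Fin 3) ℝ)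
    (D : ℕ) (hD : f.totalDegree ≤ D) (hf : ¬ γ ⊆ zeroSet f) (P : Finset (Fin 3 → ℝ)) :
    (P.filter fun p => p ∈ γ ∧ MvPolynomial.eval p f = 0).card ≤ 2 * D + 1 := by
  obtain ⟨c, U, W, ρ, hF⟩ := circle_frame hγ
  obtain ⟨q, hq, hqd, hqe⟩ := circ_poly_ne hF f D hD hf
  have hsub : (P.filter fun p => p ∈ γ ∧ MvPolynomial.eval p f = 0) ⊆
      insert (fun i => c i - U i) (q.roots.toFinset.image (circ c U W)) := by
    intro p hp
    rw [Finset.mem_filter] at hp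
    rw [Finset.mem_insert]
    rcases circ_surj hF hp.2.1 with h | ⟨t, rfl⟩
    · exact Or.inl h
    · right
      refine Finset.mem_image_of_mem _ ?_
      rw [Multiset.mem_toFinset, Polynomial.mem_roots hq, Polynomial.IsRoot, hqe]
      exact hp.2.2
  refine (Finset.card_le_card hsub).trans ((Finset.card_insert_le _ _).trans ?_)
  have h1 := Finset.card_image_le (s := q.roots.toFinset) (f := circ c U W)
  have h2 := q.roots.toFinset_card_le
  have h3 := q.card_roots'
  omega

theorem InCell.unique {d : ℕ} {g : ℕ → MvPolynomial (Fin d) ℝ} {J : ℕ} {s s' : Finset ℕ}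
    {y y' : Fin d → ℝ} (hs : s ⊆ Finset.range J) (hs' : s' ⊆ Finset.range J)
    (h : InCell g J s y) (h' : InCell g J s' y')
    (hsign : ∀ j < J, 0 < MvPolynomial.eval y (g j) ↔ 0 < MvPolynomial.eval y' (g j)) :
    s = s' := by
  ext j
  by_cases hj : j < J
  · have a := h j hj
    have b := h' j hj
    have e := hsign j hj
    constructor
    · intro hjs
      by_contra hjs'
      exact absurd (e.1 (a.1 hjs)) (not_lt.2 (b.2 hjs').le)
    · intro hjs
      by_contra hjs'
      exact absurd (e.2 (b.1 hjs)) (not_lt.2 (a.2 hjs').le)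
  · constructor
    · intro hjs
      exact absurd (Finset.mem_range.1 (hs hjs)) hj
    · intro hjs
      exact absurd (Finset.mem_range.1 (hs' hjs)) hj

theorem InCell.ne {d : ℕ} {g : ℕ → MvPolynomial (Fin d) ℝ} {J : ℕ} {s : Finset ℕ}
    {y : Fin d → ℝ} (h : InCell g J s y) :
    MvPolynomial.eval y (∏ j ∈ Finset.range J, g j) ≠ 0 := by
  rw [map_prod, Finset.prod_ne_zero_iff]
  intro j hj
  have := h j (Finset.mem_range.1 hj)
  by_cases hjs : j ∈ s
  · exact (this.1 hjs).ne'
  · exact (this.2 hjs).ne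

theorem same_sign_of_no_zero (φ : ℝ → ℝ) (hφ : Continuous φ) (a b : ℝ) (hab : a ≤ b)
    (h : ∀ t, a ≤ t → t ≤ b → φ t ≠ 0) : 0 < φ a ↔ 0 < φ b := by
  constructor
  · intro ha
    by_contra hb
    obtain ⟨t, ht, h0⟩ := intermediate_value_Icc' hab hφ.continuousOn ⟨not_lt.1 hb, ha.le⟩
    exact h t ht.1 ht.2 h0
  · intro hb
    by_contra ha
    obtain ⟨t, ht, h0⟩ := intermediate_value_Icc hab hφ.continuousOn ⟨not_lt.1 ha, hb.le⟩
    exact h t ht.1 ht.2 h0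

theorem circle_cells {γ : Set (Fin 3 → ℝ)} (hγ : IsCircle γ) (g : ℕ → MvPolynomial (Fin 3) ℝ)
    (J D : ℕ) (hD : ∑ j ∈ Finset.range J, (g j).totalDegree ≤ D)
    (hf : ¬ γ ⊆ zeroSet (∏ j ∈ Finset.range J, g j)) :
    ((Finset.range J).powerset.filter fun s => ∃ p, p ∈ γ ∧ InCell g J s p).card
      ≤ 2 * D + 2 := by
  obtain ⟨c, U, W, ρ, hF⟩ := circle_frame hγ
  set G := ∏ j ∈ Finset.range J, g j with hG
  have hGD : G.totalDegree ≤ D := (MvPolynomial.totalDegree_finsetProd _ _).trans hD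
  obtain ⟨q, hq, hqd, hqe⟩ := circ_poly_ne hF G D hGD hf
  set T := (Finset.range J).powerset.filter fun s => ∃ t, InCell g J s (circ c U W t) with hT
  set T' := (Finset.range J).powerset.filter fun s => InCell g J s (fun i => c i - U i) with hT'
  have hsub : ((Finset.range J).powerset.filter fun s => ∃ p, p ∈ γ ∧ InCell g J s p) ⊆ T ∪ T' := by
    intro s hs
    rw [Finset.mem_filter] at hs
    obtain ⟨hs1, p, hp, hps⟩ := hs
    rw [Finset.mem_union, hT, hT', Finset.mem_filter, Finset.mem_filter]
    rcases circ_surj hF hp with rfl | ⟨t, rfl⟩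
    · exact Or.inr ⟨hs1, hps⟩
    · exact Or.inl ⟨hs1, t, hps⟩
  have hT'c : T'.card ≤ 1 := by
    rw [Finset.card_le_one]
    intro s hs s' hs'
    rw [hT', Finset.mem_filter, Finset.mem_powerset] at hs hs'
    exact InCell.unique hs.1 hs'.1 hs.2 hs'.2 fun j _ => Iff.rfl
  have hTc : T.card ≤ 2 * D + 1 := by
    have hch : ∀ s, ∃ t, s ∈ T → InCell g J s (circ c U W t) := by
      intro s
      by_cases hs : s ∈ T
      · obtain ⟨t, ht⟩ := (Finset.mem_filter.1 hs).2
        exact ⟨t, fun _ => ht⟩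
      · exact ⟨0, fun h => absurd h hs⟩
    choose t ht using hch
    set R := q.roots.toFinset with hR
    have hRc : R.card ≤ 2 * D :=
      (q.roots.toFinset_card_le).trans (q.card_roots'.trans hqd)
    have hmemR : ∀ u, MvPolynomial.eval (circ c U W u) G = 0 → u ∈ R := by
      intro u hu
      rw [hR, Multiset.mem_toFinset, Polynomial.mem_roots hq, Polynomial.IsRoot, hqe]
      exact hu
    have key : ∀ s ∈ T, ∀ s' ∈ T, (R.filter (· < t s)).card = (R.filter (· < t s')).card →
        t s ≤ t s' → s = s' := by
      intro s hs s' hs' hcard hle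
      have hss : R.filter (· < t s) ⊆ R.filter (· < t s') := by
        intro u hu
        rw [Finset.mem_filter] at hu ⊢
        exact ⟨hu.1, hu.2.trans_le hle⟩
      have heq := Finset.eq_of_subset_of_card_le hss hcard.ge
      refine InCell.unique (Finset.mem_powerset.1 (Finset.mem_filter.1 hs).1)
        (Finset.mem_powerset.1 (Finset.mem_filter.1 hs').1) (ht s hs) (ht s' hs') ?_
      intro j hj
      refine same_sign_of_no_zero (fun u => MvPolynomial.eval (circ c U W u) (g j))
        ((MvPolynomial.continuous_eval _).comp (circ_continuous c U W)) _ _ hle ?_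
      intro u hu1 hu2 hu0
      have hG0 : MvPolynomial.eval (circ c U W u) G = 0 := by
        rw [hG, map_prod]
        exact Finset.prod_eq_zero (Finset.mem_range.2 hj) hu0
      have huR := hmemR u hG0
      have hne : u ≠ t s' := by
        rintro rfl
        exact (ht s' hs').ne hG0
      have : u ∈ R.filter (· < t s') := by
        rw [Finset.mem_filter]
        exact ⟨huR, lt_of_le_of_ne hu2 hne⟩
      rw [← heq, Finset.mem_filter] at this
      exact absurd this.2 (not_lt.2 hu1)
    have : T.card ≤ (Finset.range (2 * D + 1)).card := by
      refine Finset.card_le_card_of_injOn (fun s => (R.filter (· < t s)).card) ?_ ?_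
      · intro s hs
        simp only [Finset.coe_range, Set.mem_Iio]
        exact Nat.lt_succ_of_le ((Finset.card_filter_le _ _).trans hRc)
      · intro s hs s' hs' he
        rcases le_total (t s) (t s') with h | h
        · exact key s hs s' hs' he h
        · exact (key s' hs' s hs he.symm h).symm
    simpa using this
  have := (Finset.card_le_card hsub).trans (Finset.card_union_le _ _)
  omega

/-- The partitioning decomposition of the incidences. -/
theorem decomp (P : Finset (Fin 3 → ℝ)) (C : Finset (Set (Fin 3 → ℝ)))
    (hC : ∀ γ ∈ C, IsCircle γ) (g : ℕ → MvPolynomial (Fin 3) ℝ)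
    (J D : ℕ) (hD : ∑ j ∈ Finset.range J, (g j).totalDegree ≤ D) :
    ∃ Cc : Finset ℕ → Finset (Set (Fin 3 → ℝ)),
      (∀ s, Cc s ⊆ C) ∧
      ∑ s ∈ (Finset.range J).powerset, (Cc s).card ≤ (2 * D + 2) * C.card ∧
      Incidences P C ≤ ∑ s ∈ (Finset.range J).powerset,
          Incidences (P.filter fun p => InCell g J s p) (Cc s)
        + Incidences (P.filter fun p =>
            MvPolynomial.eval p (∏ j ∈ Finset.range J, g j) = 0)
          (C.filter fun γ => γ ⊆ zeroSet (∏ j ∈ Finset.range J, g j))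
        + (2 * D + 1) * C.card := by
  set G := ∏ j ∈ Finset.range J, g j with hG
  have hGD : G.totalDegree ≤ D := (MvPolynomial.totalDegree_finsetProd _ _).trans hD
  refine ⟨fun s => C.filter fun γ => ∃ p, p ∈ γ ∧ InCell g J s p,
    fun s => Finset.filter_subset _ _, ?_, ?_⟩
  · have h1 : ∑ s ∈ (Finset.range J).powerset,
        (C.filter fun γ => ∃ p, p ∈ γ ∧ InCell g J s p).card
        = ∑ γ ∈ C, ((Finset.range J).powerset.filter fun s => ∃ p, p ∈ γ ∧ InCell g J s p).card := by
      simp only [Finset.card_filter]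
      exact Finset.sum_comm
    rw [h1, mul_comm, ← smul_eq_mul]
    refine Finset.sum_le_card_nsmul _ _ _ fun γ hγ => ?_
    by_cases hγG : γ ⊆ zeroSet G
    · rw [Finset.filter_false_of_mem]
      · simp
      · rintro s hs ⟨p, hp, hps⟩
        exact hps.ne (hγG hp)
    · exact circle_cells (hC γ hγ) g J D hD hγG
  · set A := (P ×ˢ C).filter fun pc => MvPolynomial.eval pc.1 G = 0 ∧ ¬ pc.2 ⊆ zeroSet G ∧
      pc.1 ∈ pc.2 with hA
    have hAc : A.card ≤ (2 * D + 1) * C.card := by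
      have : A.card = ∑ γ ∈ C, (P.filter fun p => MvPolynomial.eval p G = 0 ∧
          ¬ γ ⊆ zeroSet G ∧ p ∈ γ).card := by
        rw [hA]
        simp only [Finset.card_filter]
        rw [Finset.sum_product_right]
      rw [this, mul_comm, ← smul_eq_mul]
      refine Finset.sum_le_card_nsmul _ _ _ fun γ hγ => ?_
      by_cases hγG : γ ⊆ zeroSet G
      · simp [hγG]
      · refine le_trans (Finset.card_le_card ?_) (circle_zero_count (hC γ hγ) G D hGD hγG P)
        intro p hp
        rw [Finset.mem_filter] at hp ⊢
        exact ⟨hp.1, hp.2.2.2, hp.2.1⟩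
    have hsub : ((P ×ˢ C).filter fun pc => pc.1 ∈ pc.2) ⊆
        ((Finset.range J).powerset.biUnion fun s =>
          ((P.filter fun p => InCell g J s p) ×ˢ
            (C.filter fun γ => ∃ p, p ∈ γ ∧ InCell g J s p)).filter fun pc => pc.1 ∈ pc.2)
        ∪ (((P.filter fun p => MvPolynomial.eval p G = 0) ×ˢ
          (C.filter fun γ => γ ⊆ zeroSet G)).filter fun pc => pc.1 ∈ pc.2) ∪ A := by
      rintro ⟨p, γ⟩ hpc
      rw [Finset.mem_filter, Finset.mem_product] at hpc
      obtain ⟨⟨hp, hγ⟩, hpγ⟩ := hpc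
      dsimp only at hp hγ hpγ
      rw [Finset.mem_union, Finset.mem_union]
      by_cases hp0 : MvPolynomial.eval p G = 0
      · by_cases hγG : γ ⊆ zeroSet G
        · left; right
          simp only [Finset.mem_filter, Finset.mem_product]
          exact ⟨⟨⟨hp, hp0⟩, hγ, hγG⟩, hpγ⟩
        · right
          simp only [hA, Finset.mem_filter, Finset.mem_product]
          exact ⟨⟨hp, hγ⟩, hp0, hγG, hpγ⟩
      · left; left
        rw [Finset.mem_biUnion]
        have hin : InCell g J ((Finset.range J).filter fun j => 0 < MvPolynomial.eval p (g j)) p := by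
          intro j hj
          have hne : MvPolynomial.eval p (g j) ≠ 0 := by
            intro h0
            apply hp0
            rw [hG, map_prod]
            exact Finset.prod_eq_zero (Finset.mem_range.2 hj) h0
          refine ⟨fun h => (Finset.mem_filter.1 h).2, fun h => ?_⟩
          by_contra hc
          exact h (Finset.mem_filter.2 ⟨Finset.mem_range.2 hj,
            lt_of_le_of_ne (not_lt.1 hc) hne.symm⟩)
        refine ⟨(Finset.range J).filter fun j => 0 < MvPolynomial.eval p (g j),
          Finset.mem_powerset.2 (Finset.filter_subset _ _), ?_⟩
        simp only [Finset.mem_filter, Finset.mem_product]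
        exact ⟨⟨⟨hp, hin⟩, hγ, p, hpγ, hin⟩, hpγ⟩
    refine (Finset.card_le_card hsub).trans ((Finset.card_union_le _ _).trans ?_)
    refine add_le_add ((Finset.card_union_le _ _).trans ?_) hAc
    exact add_le_add Finset.card_biUnion_le le_rfl

theorem affine_three {α β δ a1 b1 a2 b2 a3 b3 : ℝ} (h1 : a1 ^ 2 + b1 ^ 2 = 1)
    (h2 : a2 ^ 2 + b2 ^ 2 = 1) (h3 : a3 ^ 2 + b3 ^ 2 = 1)
    (h12 : ¬ (a1 = a2 ∧ b1 = b2)) (h13 : ¬ (a1 = a3 ∧ b1 = b3)) (h23 : ¬ (a2 = a3 ∧ b2 = b3))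
    (e1 : α * a1 + β * b1 + δ = 0) (e2 : α * a2 + β * b2 + δ = 0) (e3 : α * a3 + β * b3 + δ = 0) :
    ∀ a b : ℝ, α * a + β * b + δ = 0 := by
  have hE : (a2 - a1) * (b3 - b1) - (a3 - a1) * (b2 - b1) ≠ 0 := by
    intro hE
    obtain ⟨μ, hμa, hμb⟩ : ∃ μ, a3 - a1 = μ * (a2 - a1) ∧ b3 - b1 = μ * (b2 - b1) := by
      by_cases ha : a2 - a1 = 0
      · have hb : b2 - b1 ≠ 0 := fun hb => h12 ⟨by linarith, by linarith⟩
        refine ⟨(b3 - b1) / (b2 - b1), ?_, by field_simp⟩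
        rw [ha] at hE ⊢
        have : (a3 - a1) * (b2 - b1) = 0 := by linarith
        rcases mul_eq_zero.1 this with h | h
        · linarith
        · exact absurd h hb
      · refine ⟨(a3 - a1) / (a2 - a1), by field_simp, ?_⟩
        field_simp
        linarith
    have hpos : 0 < (a2 - a1) ^ 2 + (b2 - b1) ^ 2 := by
      by_contra hc
      apply h12
      constructor <;> nlinarith [sq_nonneg (a2 - a1), sq_nonneg (b2 - b1)]
    have ha3 : a3 = a1 + μ * (a2 - a1) := by linarith
    have hb3 : b3 = b1 + μ * (b2 - b1) := by linarith
    have : μ * (μ - 1) * ((a2 - a1) ^ 2 + (b2 - b1) ^ 2) = 0 := by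
      rw [ha3, hb3] at h3
      linear_combination h3 - h1 - μ * (h2 - h1)
    rcases mul_eq_zero.1 this with h | h
    · rcases mul_eq_zero.1 h with h | h
      · apply h13; rw [ha3, hb3, h]; constructor <;> ring
      · have : μ = 1 := by linarith
        apply h23; rw [ha3, hb3, this]; constructor <;> ring
    · linarith
  have hα : α = 0 := by
    have : α * ((a2 - a1) * (b3 - b1) - (a3 - a1) * (b2 - b1)) = 0 := by
      linear_combination (b3 - b1) * (e2 - e1) - (b2 - b1) * (e3 - e1)
    exact (mul_eq_zero.1 this).resolve_right hE
  have hβ : β = 0 := by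
    have : β * ((a2 - a1) * (b3 - b1) - (a3 - a1) * (b2 - b1)) = 0 := by
      linear_combination (a2 - a1) * (e3 - e1) - (a3 - a1) * (e2 - e1)
    exact (mul_eq_zero.1 this).resolve_right hE
  intro a b
  rw [hα, hβ] at e1 ⊢
  linarith

theorem circle_sub_of_three {γ γ' : Set (Fin 3 → ℝ)} (h : IsCircle γ) (h' : IsCircle γ')
    {p1 p2 p3 : Fin 3 → ℝ} (h12 : p1 ≠ p2) (h13 : p1 ≠ p3) (h23 : p2 ≠ p3)
    (m1 : p1 ∈ γ) (m2 : p2 ∈ γ) (m3 : p3 ∈ γ) (m1' : p1 ∈ γ') (m2' : p2 ∈ γ') (m3' : p3 ∈ γ') :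
    γ ⊆ γ' := by
  obtain ⟨c, U, W, ρ, hρ, hU, hW, hUW, rfl⟩ := circle_frame h
  obtain ⟨c', v, ρ', hρ', hv, rfl⟩ := h'
  obtain ⟨a1, b1, u1, x1⟩ := m1
  obtain ⟨a2, b2, u2, x2⟩ := m2
  obtain ⟨a3, b3, u3, x3⟩ := m3
  have n12 : ¬ (a1 = a2 ∧ b1 = b2) := by
    rintro ⟨rfl, rfl⟩
    exact h12 (funext fun i => by rw [x1, x2])
  have n13 : ¬ (a1 = a3 ∧ b1 = b3) := by
    rintro ⟨rfl, rfl⟩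
    exact h13 (funext fun i => by rw [x1, x3])
  have n23 : ¬ (a2 = a3 ∧ b2 = b3) := by
    rintro ⟨rfl, rfl⟩
    exact h23 (funext fun i => by rw [x2, x3])
  simp only [Set.mem_ofPred_eq, Fin.sum_univ_three, x1, x2, x3] at m1' m2' m3' hU hW hUW
  rintro x ⟨a, b, u, hx⟩
  simp only [Set.mem_ofPred_eq, Fin.sum_univ_three, hx]
  constructor
  · have key : ∀ a b : ℝ, a ^ 2 + b ^ 2 = 1 →
        (c 0 + a * U 0 + b * W 0 - c' 0) ^ 2 + (c 1 + a * U 1 + b * W 1 - c' 1) ^ 2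
          + (c 2 + a * U 2 + b * W 2 - c' 2) ^ 2 - ρ' ^ 2
        = 2 * (U 0 * (c 0 - c' 0) + U 1 * (c 1 - c' 1) + U 2 * (c 2 - c' 2)) * a
          + 2 * (W 0 * (c 0 - c' 0) + W 1 * (c 1 - c' 1) + W 2 * (c 2 - c' 2)) * b
          + ((c 0 - c' 0) ^ 2 + (c 1 - c' 1) ^ 2 + (c 2 - c' 2) ^ 2 + ρ ^ 2 - ρ' ^ 2) := by
      intro a b hab
      linear_combination a ^ 2 * hU + b ^ 2 * hW + 2 * a * b * hUW + ρ ^ 2 * hab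
    have := affine_three u1 u2 u3 n12 n13 n23 ((key _ _ u1).symm.trans (by linarith [m1'.1]))
      ((key _ _ u2).symm.trans (by linarith [m2'.1])) ((key _ _ u3).symm.trans (by linarith [m3'.1]))
      a b
    have k := key a b u
    linarith
  · have key : ∀ a b : ℝ, v 0 * (c 0 + a * U 0 + b * W 0 - c' 0)
          + v 1 * (c 1 + a * U 1 + b * W 1 - c' 1) + v 2 * (c 2 + a * U 2 + b * W 2 - c' 2)
        = (v 0 * U 0 + v 1 * U 1 + v 2 * U 2) * a + (v 0 * W 0 + v 1 * W 1 + v 2 * W 2) * b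
          + (v 0 * (c 0 - c' 0) + v 1 * (c 1 - c' 1) + v 2 * (c 2 - c' 2)) := by
      intro a b
      ring
    rw [key]
    exact affine_three u1 u2 u3 n12 n13 n23 ((key _ _).symm.trans m1'.2)
      ((key _ _).symm.trans m2'.2) ((key _ _).symm.trans m3'.2) a b

theorem nat_le_choose_three (k : ℕ) : k ≤ 2 + k.choose 3 := by
  induction k with
  | zero => simp
  | succ n ih =>
    rw [Nat.choose_succ_succ' n 2]
    by_cases h : n < 2
    · omega
    · have : 0 < n.choose 2 := Nat.choose_pos (by omega)
      simp only [Nat.reduceAdd] at *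
      omega

theorem incidences_eq_sum (P : Finset (Fin 3 → ℝ)) (C : Finset (Set (Fin 3 → ℝ))) :
    Incidences P C = ∑ γ ∈ C, (P.filter fun p => p ∈ γ).card := by
  unfold Incidences
  simp only [Finset.card_filter]
  rw [Finset.sum_product_right]

theorem incidences_le_mul (P : Finset (Fin 3 → ℝ)) (C : Finset (Set (Fin 3 → ℝ))) :
    Incidences P C ≤ P.card * C.card := by
  refine (Finset.card_filter_le _ _).trans ?_
  rw [Finset.card_product]

theorem kst (P : Finset (Fin 3 → ℝ)) (C : Finset (Set (Fin 3 → ℝ)))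
    (hC : ∀ γ ∈ C, IsCircle γ) : Incidences P C ≤ 2 * C.card + P.card ^ 3 := by
  rw [incidences_eq_sum]
  have h1 : ∑ γ ∈ C, (P.filter fun p => p ∈ γ).card ≤
      ∑ γ ∈ C, (2 + ((P.filter fun p => p ∈ γ).powersetCard 3).card) := by
    refine Finset.sum_le_sum fun γ _ => ?_
    rw [Finset.card_powersetCard]
    exact nat_le_choose_three _
  have h2 : ∑ γ ∈ C, ((P.filter fun p => p ∈ γ).powersetCard 3).card ≤ P.card ^ 3 := by
    rw [← Finset.card_biUnion]
    · have hsub : (C.biUnion fun γ => (P.filter fun p => p ∈ γ).powersetCard 3) ⊆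
          P.powersetCard 3 := by
        intro t ht
        obtain ⟨γ, hγ, ht⟩ := Finset.mem_biUnion.1 ht
        exact Finset.powersetCard_mono (Finset.filter_subset _ _) ht
      refine (Finset.card_le_card hsub).trans ?_
      rw [Finset.card_powersetCard]
      exact Nat.choose_le_pow _ _
    · intro γ hγ γ' hγ' hne
      rw [Function.onFun, Finset.disjoint_left]
      intro t ht ht'
      apply hne
      rw [Finset.mem_powersetCard] at ht ht'
      obtain ⟨p1, p2, p3, h12, h13, h23, rfl⟩ := Finset.card_eq_three.1 ht.2
      have f : ∀ x ∈ ({p1, p2, p3} : Finset (Fin 3 → ℝ)), x ∈ γ :=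
        fun x hx => (Finset.mem_filter.1 (ht.1 hx)).2
      have f' : ∀ x ∈ ({p1, p2, p3} : Finset (Fin 3 → ℝ)), x ∈ γ' :=
        fun x hx => (Finset.mem_filter.1 (ht'.1 hx)).2
      apply Set.Subset.antisymm
      · exact circle_sub_of_three (hC γ hγ) (hC γ' hγ') h12 h13 h23 (f p1 (by simp)) (f p2 (by simp))
          (f p3 (by simp)) (f' p1 (by simp)) (f' p2 (by simp)) (f' p3 (by simp))
      · exact circle_sub_of_three (hC γ' hγ') (hC γ hγ) h12 h13 h23 (f' p1 (by simp))
          (f' p2 (by simp)) (f' p3 (by simp)) (f p1 (by simp)) (f p2 (by simp)) (f p3 (by simp))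
  rw [Finset.sum_add_distrib, Finset.sum_const, smul_eq_mul] at h1
  omega

/-- A conic which is monic in the first variable. -/
def conic (b c : MvPolynomial (Fin 1) ℝ) : MvPolynomial (Fin 2) ℝ :=
  (MvPolynomial.finSuccEquiv ℝ 1).symm
    (Polynomial.X ^ 2 + Polynomial.C b * Polynomial.X + Polynomial.C c)

theorem conic_eval (b c : MvPolynomial (Fin 1) ℝ) (s : Fin 1 → ℝ) (y : ℝ) :
    MvPolynomial.eval (Fin.cons y s : Fin 2 → ℝ) (conic b c)
      = y ^ 2 + MvPolynomial.eval s b * y + MvPolynomial.eval s c := by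
  rw [MvPolynomial.eval_eq_eval_mv_eval', conic, AlgEquiv.apply_symm_apply]
  simp

theorem conic_dvd (b c : MvPolynomial (Fin 1) ℝ) (s₀ : Fin 1 → ℝ) (y₀ : ℝ)
    (hneg : MvPolynomial.eval (Fin.cons y₀ s₀ : Fin 2 → ℝ) (conic b c) < 0)
    (f : MvPolynomial (Fin 2) ℝ)
    (hf : ∀ x, MvPolynomial.eval x (conic b c) = 0 → MvPolynomial.eval x f = 0) :
    conic b c ∣ f := by
  set E : Polynomial (MvPolynomial (Fin 1) ℝ) :=
    Polynomial.X ^ 2 + Polynomial.C b * Polynomial.X + Polynomial.C c with hE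
  have hdeg : (Polynomial.C b * Polynomial.X + Polynomial.C c).degree < 2 := by
    refine lt_of_le_of_lt (Polynomial.degree_linear_le) (by norm_num)
  have hmon : E.Monic := by
    rw [hE, add_assoc]
    exact Polynomial.monic_X_pow_add (by exact_mod_cast hdeg)
  have hEdeg : E.degree = 2 := by
    rw [hE, add_assoc, Polynomial.degree_add_eq_left_of_degree_lt]
    · simp
    · simpa using hdeg
  set F := MvPolynomial.finSuccEquiv ℝ 1 f with hF
  set r := F %ₘ E with hr
  have hrdeg : r.degree ≤ 1 := by
    have := Polynomial.degree_modByMonic_lt F hmon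
    rw [hEdeg] at this
    rw [Polynomial.degree_le_iff_coeff_zero]
    intro m hm
    refine Polynomial.coeff_eq_zero_of_degree_lt (lt_of_lt_of_le this ?_)
    have hm' : 1 < m := by exact_mod_cast hm
    exact_mod_cast hm'
  have hrform := Polynomial.eq_X_add_C_of_degree_le_one hrdeg
  have hdiv : r + E * (F /ₘ E) = F := Polynomial.modByMonic_add_div F E
  let T : Set ℝ := {s | y₀ ^ 2 + MvPolynomial.eval (fun _ => s) b * y₀
    + MvPolynomial.eval (fun _ => s) c < 0}
  have hTopen : IsOpen T := by
    have hc : ∀ p : MvPolynomial (Fin 1) ℝ,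
        Continuous fun s : ℝ => MvPolynomial.eval (fun _ => s) p := fun p =>
      (MvPolynomial.continuous_eval p).comp (continuous_pi fun _ => continuous_id)
    exact isOpen_lt (by have := hc b; have := hc c; fun_prop) continuous_const
  have hT0 : s₀ 0 ∈ T := by
    have e : (fun _ => s₀ 0) = s₀ := by
      ext i; rw [Subsingleton.elim i 0]
    simp only [T, Set.mem_ofPred_eq]
    rw [e]
    rw [conic_eval] at hneg
    exact hneg
  have hTinf : T.Infinite := infinite_of_mem_nhds (s₀ 0) (hTopen.mem_nhds hT0)
  have hlin : ∀ s ∈ T, MvPolynomial.eval (fun _ => s) (r.coeff 1) = 0 ∧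
      MvPolynomial.eval (fun _ => s) (r.coeff 0) = 0 := by
    intro s hs
    set β := MvPolynomial.eval (fun _ => s) b with hβ
    set κ := MvPolynomial.eval (fun _ => s) c with hκ
    have hs' : y₀ ^ 2 + β * y₀ + κ < 0 := hs
    have hdisc : 0 < β ^ 2 - 4 * κ := by nlinarith [sq_nonneg (2 * y₀ + β)]
    set q := Real.sqrt (β ^ 2 - 4 * κ) with hq
    have hq0 : 0 < q := Real.sqrt_pos.2 hdisc
    have hq2 : q ^ 2 = β ^ 2 - 4 * κ := Real.sq_sqrt hdisc.le
    have hroot : ∀ y : ℝ, y ^ 2 + β * y + κ = 0 →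
        MvPolynomial.eval (fun _ => s) (r.coeff 1) * y
          + MvPolynomial.eval (fun _ => s) (r.coeff 0) = 0 := by
      intro y hy
      have h1 := hf (Fin.cons y fun _ => s) (by rw [conic_eval]; exact hy)
      rw [MvPolynomial.eval_eq_eval_mv_eval', ← hF, ← hdiv] at h1
      have hE0 : Polynomial.eval y (Polynomial.map (MvPolynomial.eval fun _ => s) E) = 0 := by
        rw [hE]
        simpa using hy
      rw [Polynomial.map_add, Polynomial.map_mul, Polynomial.eval_add, Polynomial.eval_mul, hE0,
        zero_mul, add_zero, hrform] at h1
      simpa using h1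
    have h1 := hroot ((-β + q) / 2) (by nlinarith)
    have h2 := hroot ((-β - q) / 2) (by nlinarith)
    have h3 : MvPolynomial.eval (fun _ => s) (r.coeff 1) * q = 0 := by linarith
    have h4 := (mul_eq_zero.1 h3).resolve_right hq0.ne'
    rw [h4] at h1
    exact ⟨h4, by linarith⟩
  have hz : ∀ p : MvPolynomial (Fin 1) ℝ, (∀ s ∈ T, MvPolynomial.eval (fun _ => s) p = 0) → p = 0 := by
    intro p hp
    refine MvPolynomial.funext_set (fun _ => T) (fun _ => hTinf) ?_
    intro x hx
    have e : x = fun _ => x 0 := by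
      ext i; rw [Subsingleton.elim i 0]
    rw [e, map_zero]
    exact hp _ (hx 0 (Set.mem_univ _))
  have hr0 : r = 0 := by
    rw [hrform, hz _ fun s hs => (hlin s hs).1, hz _ fun s hs => (hlin s hs).2]
    simp
  have hdvd : E ∣ F := (Polynomial.modByMonic_eq_zero_iff_dvd hmon).1 hr0
  obtain ⟨k, hk⟩ := hdvd
  refine ⟨(MvPolynomial.finSuccEquiv ℝ 1).symm k, ?_⟩
  rw [conic, ← map_mul, ← hE, ← hk, hF, AlgEquiv.symm_apply_apply]

/-- The projection along the direction `(a, b, 1)`. -/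
def proj (a b : ℝ) (x : Fin 3 → ℝ) : Fin 2 → ℝ := ![x 0 - a * x 2, x 1 - b * x 2]

/-- Pull back of polynomials along the projection. -/
def projA (a b : ℝ) : MvPolynomial (Fin 2) ℝ →ₐ[ℝ] MvPolynomial (Fin 3) ℝ :=
  MvPolynomial.aeval ![MvPolynomial.X 0 - MvPolynomial.C a * MvPolynomial.X 2,
    MvPolynomial.X 1 - MvPolynomial.C b * MvPolynomial.X 2]

theorem projA_eval (a b : ℝ) (f : MvPolynomial (Fin 2) ℝ) (x : Fin 3 → ℝ) :
    MvPolynomial.eval x (projA a b f) = MvPolynomial.eval (proj a b x) f := by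
  induction f using MvPolynomial.induction_on with
  | C r => simp [projA]
  | add p q hp hq => rw [map_add, map_add, map_add, hp, hq]
  | mul_X p i hp =>
    rw [map_mul, map_mul, map_mul, hp]
    congr 1
    fin_cases i <;> simp [projA, proj]

theorem projA_degree (a b : ℝ) (f : MvPolynomial (Fin 2) ℝ) :
    (projA a b f).totalDegree ≤ f.totalDegree := by
  rw [projA, MvPolynomial.aeval_def, MvPolynomial.eval₂_eq']
  refine MvPolynomial.totalDegree_finsetSum_le fun m hm => ?_
  refine (MvPolynomial.totalDegree_mul _ _).trans ?_
  have h0 : (algebraMap ℝ (MvPolynomial (Fin 3) ℝ) (f.coeff m)).totalDegree = 0 :=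
    MvPolynomial.totalDegree_C _
  rw [h0, zero_add]
  refine (MvPolynomial.totalDegree_finsetProd _ _).trans ?_
  have h1 := MvPolynomial.le_totalDegree hm
  refine le_trans ?_ h1
  rw [Finsupp.sum_fintype _ _ (fun _ => rfl)]
  refine Finset.sum_le_sum fun i _ => ?_
  refine (MvPolynomial.totalDegree_pow _ _).trans ?_
  have hl : ∀ (k l : Fin 3) (r : ℝ), (MvPolynomial.X k - MvPolynomial.C r * MvPolynomial.X l :
      MvPolynomial (Fin 3) ℝ).totalDegree ≤ 1 := by
    intro k l r
    refine (MvPolynomial.totalDegree_sub _ _).trans (max_le (by simp) ?_)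
    refine (MvPolynomial.totalDegree_mul _ _).trans (by simp)
  have : (![MvPolynomial.X 0 - MvPolynomial.C a * MvPolynomial.X 2,
    MvPolynomial.X 1 - MvPolynomial.C b * MvPolynomial.X 2] i :
      MvPolynomial (Fin 3) ℝ).totalDegree ≤ 1 := by
    fin_cases i
    · exact hl _ _ _
    · exact hl _ _ _
  calc _ ≤ m i * 1 := Nat.mul_le_mul_left _ this
    _ = m i := mul_one _

/-- The genericity form. -/
def qform (c v : Fin 3 → ℝ) (ρ : ℝ) (p : Fin 3 → ℝ) (a b : ℝ) : ℝ :=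
  ((v 0 * a + v 1 * b + v 2) * (p 0 - c 0)
      - (v 0 * (p 0 - c 0) + v 1 * (p 1 - c 1) + v 2 * (p 2 - c 2)) * a) ^ 2
    + ((v 0 * a + v 1 * b + v 2) * (p 1 - c 1)
      - (v 0 * (p 0 - c 0) + v 1 * (p 1 - c 1) + v 2 * (p 2 - c 2)) * b) ^ 2
    + ((v 0 * a + v 1 * b + v 2) * (p 2 - c 2)
      - (v 0 * (p 0 - c 0) + v 1 * (p 1 - c 1) + v 2 * (p 2 - c 2))) ^ 2
    - ρ ^ 2 * (v 0 * a + v 1 * b + v 2) ^ 2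

theorem circle_conic (c v : Fin 3 → ℝ) (ρ : ℝ) (hρ : 0 < ρ) (a b : ℝ)
    (hδ : v 0 * a + v 1 * b + v 2 ≠ 0) (γ : Set (Fin 3 → ℝ))
    (hγ : γ = {x | (∑ i, (x i - c i) ^ 2) = ρ ^ 2 ∧ (∑ i, v i * (x i - c i)) = 0}) :
    ∃ e : MvPolynomial (Fin 2) ℝ, e ≠ 0 ∧ 1 ≤ e.totalDegree ∧
      (∀ f, γ ⊆ zeroSet (projA a b f) → e ∣ f) ∧
      (∀ p, MvPolynomial.eval (proj a b p) e = 0 → qform c v ρ p a b = 0) := by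
  set δ := v 0 * a + v 1 * b + v 2 with hδd
  set α0 := v 0 / δ with hα0
  set α1 := v 1 / δ with hα1
  set κ := (v 0 * c 0 + v 1 * c 1 + v 2 * c 2) / δ with hκ
  have h0 : v 0 = α0 * δ := by rw [hα0]; field_simp
  have h1 : v 1 = α1 * δ := by rw [hα1]; field_simp
  have h2 : v 2 = (1 - α0 * a - α1 * b) * δ := by
    linear_combination -hδd - a * h0 - b * h1
  have hk : κ = α0 * c 0 + α1 * c 1 + (1 - α0 * a - α1 * b) * c 2 := by
    rw [hκ, h2]
    rw [div_eq_iff hδ, h0, h1]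
    ring
  set A := (1 - α0 * a) ^ 2 + (α0 * b) ^ 2 + α0 ^ 2 with hA
  have hApos : 0 < A := by
    by_cases hz : α0 = 0
    · rw [hA, hz]; norm_num
    · have : 0 < α0 ^ 2 := by positivity
      have := sq_nonneg (1 - α0 * a)
      have := sq_nonneg (α0 * b)
      linarith
  let X : MvPolynomial (Fin 1) ℝ := MvPolynomial.X 0
  let K : ℝ → MvPolynomial (Fin 1) ℝ := MvPolynomial.C
  let M0 : MvPolynomial (Fin 1) ℝ := (K κ - K α1 * X) * K a - K (c 0)
  let M1 : MvPolynomial (Fin 1) ℝ := X + (K κ - K α1 * X) * K b - K (c 1)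
  let M2 : MvPolynomial (Fin 1) ℝ := (K κ - K α1 * X) - K (c 2)
  let B := K (1 / A) * (2 * (K (1 - α0 * a) * M0 - K (α0 * b) * M1 - K α0 * M2))
  let Γ := K (1 / A) * (M0 ^ 2 + M1 ^ 2 + M2 ^ 2 - K (ρ ^ 2))
  have heval : ∀ u : Fin 2 → ℝ, A * MvPolynomial.eval u (conic B Γ)
      = (u 0 + (κ - α0 * u 0 - α1 * u 1) * a - c 0) ^ 2
        + (u 1 + (κ - α0 * u 0 - α1 * u 1) * b - c 1) ^ 2
        + ((κ - α0 * u 0 - α1 * u 1) - c 2) ^ 2 - ρ ^ 2 := by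
    intro u
    have hu : u = (Fin.cons (u 0) (fun _ => u 1) : Fin 2 → ℝ) := by
      ext i; fin_cases i <;> rfl
    conv_lhs => rw [hu]
    rw [conic_eval]
    simp only [B, Γ, M0, M1, M2, X, K, map_mul, map_add, map_sub, map_pow, MvPolynomial.eval_C,
      MvPolynomial.eval_X, map_ofNat]
    field_simp
    rw [hA]
    ring
  have hin : ∀ u : Fin 2 → ℝ, MvPolynomial.eval u (conic B Γ) = 0 →
      ∃ x ∈ γ, proj a b x = u := by
    intro u hu
    refine ⟨![u 0 + (κ - α0 * u 0 - α1 * u 1) * a, u 1 + (κ - α0 * u 0 - α1 * u 1) * b,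
      κ - α0 * u 0 - α1 * u 1], ?_, ?_⟩
    · rw [hγ]
      have := heval u
      rw [hu] at this
      constructor
      · simp only [Fin.sum_univ_three, Matrix.cons_val]
        linarith
      · simp only [Fin.sum_univ_three, Matrix.cons_val]
        rw [h0, h1, h2, hk]
        ring
    · ext i
      fin_cases i <;> simp [proj] <;> ring
  have hneg : MvPolynomial.eval (Fin.cons (proj a b c 0) (fun _ => proj a b c 1) : Fin 2 → ℝ)
      (conic B Γ) < 0 := by
    have := heval (Fin.cons (proj a b c 0) (fun _ => proj a b c 1))
    simp only [Fin.cons_zero, Fin.cons_one] at this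
    have e1 : proj a b c 0 = c 0 - a * c 2 := rfl
    have e2 : proj a b c 1 = c 1 - b * c 2 := rfl
    rw [e1, e2, hk] at this
    have h3 : A * MvPolynomial.eval (Fin.cons (c 0 - a * c 2) (fun _ => c 1 - b * c 2) : Fin 2 → ℝ)
      (conic B Γ) = - ρ ^ 2 := by
      rw [this]; ring
    rw [e1, e2]
    have h4 : 0 < ρ ^ 2 := by positivity
    by_contra hcon
    have := mul_nonneg hApos.le (not_lt.1 hcon)
    linarith
  have hzero : ∃ u, MvPolynomial.eval u (conic B Γ) = 0 := by
    set s : Fin 1 → ℝ := fun _ => proj a b c 1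
    set y := proj a b c 0
    rw [conic_eval] at hneg
    set β := MvPolynomial.eval s B
    set ι := MvPolynomial.eval s Γ
    have hdisc : 0 < β ^ 2 - 4 * ι := by nlinarith [sq_nonneg (2 * y + β)]
    refine ⟨Fin.cons ((-β + Real.sqrt (β ^ 2 - 4 * ι)) / 2) s, ?_⟩
    rw [conic_eval]
    have := Real.sq_sqrt hdisc.le
    change ((-β + Real.sqrt (β ^ 2 - 4 * ι)) / 2) ^ 2
      + β * ((-β + Real.sqrt (β ^ 2 - 4 * ι)) / 2) + ι = 0
    nlinarith
  refine ⟨conic B Γ, ?_, ?_, ?_, ?_⟩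
  · intro h
    rw [h] at hneg
    simp at hneg
  · by_contra hcon
    have hd : (conic B Γ).totalDegree = 0 := by omega
    rw [MvPolynomial.totalDegree_eq_zero_iff_eq_C] at hd
    obtain ⟨u, hu⟩ := hzero
    rw [hd, MvPolynomial.eval_C] at hu hneg
    linarith
  · intro f hf
    refine conic_dvd B Γ _ _ hneg f ?_
    intro u hu
    obtain ⟨x, hx, rfl⟩ := hin u hu
    have := hf hx
    rw [zeroSet, Set.mem_ofPred_eq, projA_eval] at this
    exact this
  · intro p hp
    have := heval (proj a b p)
    have e1 : proj a b p 0 = p 0 - a * p 2 := rfl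
    have e2 : proj a b p 1 = p 1 - b * p 2 := rfl
    rw [hp, e1, e2, hk, mul_zero] at this
    rw [qform, ← hδd, h0, h1, h2]
    linear_combination - δ ^ 2 * this

theorem qform_generic (c v : Fin 3 → ℝ) (ρ : ℝ) (hρ : 0 < ρ) (hv : v ≠ 0) (p : Fin 3 → ℝ)
    (hp : ¬ ((∑ i, (p i - c i) ^ 2) = ρ ^ 2 ∧ (∑ i, v i * (p i - c i)) = 0)) :
    ∃ a b, qform c v ρ p a b ≠ 0 := by
  rw [Fin.sum_univ_three, Fin.sum_univ_three] at hp
  set w0 := p 0 - c 0 with hw0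
  set w1 := p 1 - c 1 with hw1
  set w2 := p 2 - c 2 with hw2
  have hv' : v 0 ≠ 0 ∨ v 1 ≠ 0 ∨ v 2 ≠ 0 := by
    by_contra hcon
    push Not at hcon
    apply hv
    ext i
    fin_cases i
    · exact hcon.1
    · exact hcon.2.1
    · exact hcon.2.2
  by_cases hvw : v 0 * w0 + v 1 * w1 + v 2 * w2 = 0
  · have hne : w0 ^ 2 + w1 ^ 2 + w2 ^ 2 - ρ ^ 2 ≠ 0 := by
      intro h
      exact hp ⟨by linarith, hvw⟩
    obtain ⟨a, b, hab⟩ : ∃ a b, v 0 * a + v 1 * b + v 2 ≠ 0 := by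
      by_cases h2 : v 2 = 0
      · rcases hv' with h | h | h
        · exact ⟨1, 0, by rw [h2]; simpa using h⟩
        · exact ⟨0, 1, by rw [h2]; simpa using h⟩
        · exact absurd h2 h
      · exact ⟨0, 0, by simpa using h2⟩
    refine ⟨a, b, ?_⟩
    have : qform c v ρ p a b = (v 0 * a + v 1 * b + v 2) ^ 2 * (w0 ^ 2 + w1 ^ 2 + w2 ^ 2 - ρ ^ 2) := by
      rw [qform, ← hw0, ← hw1, ← hw2, hvw]
      ring
    rw [this]
    exact mul_ne_zero (pow_ne_zero _ hab) hne
  · by_cases h01 : v 0 = 0 ∧ v 1 = 0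
    · obtain ⟨h0, h1⟩ := h01
      have h2 : v 2 ≠ 0 := by
        rcases hv' with h | h | h
        · exact absurd h0 h
        · exact absurd h1 h
        · exact h
      rw [h0, h1, zero_mul, zero_mul, zero_add, zero_add] at hvw
      have hw2n : w2 ≠ 0 := fun h => hvw (by rw [h, mul_zero])
      refine ⟨(w0 - ρ - 1) / w2, w1 / w2, ?_⟩
      have : qform c v ρ p ((w0 - ρ - 1) / w2) (w1 / w2) = v 2 ^ 2 * (2 * ρ + 1) := by
        rw [qform, ← hw0, ← hw1, ← hw2, h0, h1]
        field_simp
        ring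
      rw [this]
      positivity
    · obtain ⟨a, b, hab⟩ : ∃ a b, v 0 * a + v 1 * b + v 2 = 0 := by
        by_cases h0 : v 0 = 0
        · have h1 : v 1 ≠ 0 := fun h => h01 ⟨h0, h⟩
          exact ⟨0, -v 2 / v 1, by field_simp; ring⟩
        · exact ⟨-v 2 / v 0, 0, by field_simp; ring⟩
      refine ⟨a, b, ?_⟩
      have : qform c v ρ p a b = (v 0 * w0 + v 1 * w1 + v 2 * w2) ^ 2 * (a ^ 2 + b ^ 2 + 1) := by
        rw [qform, ← hw0, ← hw1, ← hw2, hab]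
        ring
      rw [this]
      have : 0 < a ^ 2 + b ^ 2 + 1 := by positivity
      exact mul_ne_zero (pow_ne_zero _ hvw) this.ne'

theorem generic_point {ι : Type*} (S : Finset ι) (F : ι → MvPolynomial (Fin 2) ℝ)
    (h : ∀ i ∈ S, ∃ x, MvPolynomial.eval x (F i) ≠ 0) :
    ∃ x, ∀ i ∈ S, MvPolynomial.eval x (F i) ≠ 0 := by
  have hne : ∏ i ∈ S, F i ≠ 0 := by
    rw [Finset.prod_ne_zero_iff]
    rintro i hi h0
    obtain ⟨x, hx⟩ := h i hi
    exact hx (by rw [h0, map_zero])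
  by_contra hcon
  push Not at hcon
  apply hne
  refine MvPolynomial.funext fun x => ?_
  obtain ⟨i, hi, h0⟩ := hcon x
  rw [map_prod, map_zero]
  exact Finset.prod_eq_zero hi h0

theorem lin_poly (v : Fin 3 → ℝ) : ∃ F : MvPolynomial (Fin 2) ℝ, ∀ x,
    MvPolynomial.eval x F = v 0 * x 0 + v 1 * x 1 + v 2 :=
  ⟨MvPolynomial.C (v 0) * MvPolynomial.X 0 + MvPolynomial.C (v 1) * MvPolynomial.X 1
    + MvPolynomial.C (v 2), fun x => by simp⟩

theorem qform_poly (c v : Fin 3 → ℝ) (ρ : ℝ) (p : Fin 3 → ℝ) : ∃ F : MvPolynomial (Fin 2) ℝ, ∀ x,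
    MvPolynomial.eval x F = qform c v ρ p (x 0) (x 1) := by
  obtain ⟨L, hL⟩ := lin_poly v
  let K : ℝ → MvPolynomial (Fin 2) ℝ := MvPolynomial.C
  let s := v 0 * (p 0 - c 0) + v 1 * (p 1 - c 1) + v 2 * (p 2 - c 2)
  refine ⟨(L * K (p 0 - c 0) - K s * MvPolynomial.X 0) ^ 2
    + (L * K (p 1 - c 1) - K s * MvPolynomial.X 1) ^ 2
    + (L * K (p 2 - c 2) - K s) ^ 2 - K (ρ ^ 2) * L ^ 2, fun x => ?_⟩
  simp only [map_mul, map_add, map_sub, map_pow, MvPolynomial.eval_C,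
      MvPolynomial.eval_X, hL, K, qform, s]

theorem circle_not_subset {γ γ' : Set (Fin 3 → ℝ)} (h : IsCircle γ) (h' : IsCircle γ')
    (hne : γ ≠ γ') : ∃ p ∈ γ', p ∉ γ := by
  by_contra hcon
  push Not at hcon
  obtain ⟨c, U, W, ρ, hF⟩ := circle_frame h'
  have hF' := hF
  obtain ⟨hρ, hU, hW, hUW, he⟩ := hF'
  have hinj : Function.Injective (circ c U W) := by
    intro s t hst
    have hW0 : 0 < ∑ i, W i ^ 2 := by rw [hW]; positivity
    have hU0 : 0 < ∑ i, U i ^ 2 := by rw [hU]; positivity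
    simp only [Fin.sum_univ_three] at *
    have e : ∀ i, ((1 - s ^ 2) / (1 + s ^ 2) - (1 - t ^ 2) / (1 + t ^ 2)) * U i
        + (2 * s / (1 + s ^ 2) - 2 * t / (1 + t ^ 2)) * W i = 0 := by
      intro i
      have := congrFun hst i
      simp only [circ] at this
      linarith
    have h1 : ((1 - s ^ 2) / (1 + s ^ 2) - (1 - t ^ 2) / (1 + t ^ 2)) * ρ ^ 2 = 0 := by
      linear_combination U 0 * e 0 + U 1 * e 1 + U 2 * e 2
        - ((1 - s ^ 2) / (1 + s ^ 2) - (1 - t ^ 2) / (1 + t ^ 2)) * hU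
        - (2 * s / (1 + s ^ 2) - 2 * t / (1 + t ^ 2)) * hUW
    have h2 : (2 * s / (1 + s ^ 2) - 2 * t / (1 + t ^ 2)) * ρ ^ 2 = 0 := by
      linear_combination W 0 * e 0 + W 1 * e 1 + W 2 * e 2
        - ((1 - s ^ 2) / (1 + s ^ 2) - (1 - t ^ 2) / (1 + t ^ 2)) * hUW
        - (2 * s / (1 + s ^ 2) - 2 * t / (1 + t ^ 2)) * hW
    have hρ2 : ρ ^ 2 ≠ 0 := by positivity
    have h3 := (mul_eq_zero.1 h1).resolve_right hρ2
    have h4 := (mul_eq_zero.1 h2).resolve_right hρ2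
    have ps : 1 + s ^ 2 ≠ 0 := by positivity
    have pt : 1 + t ^ 2 ≠ 0 := by positivity
    have h5 : (1 - s ^ 2) * (1 + t ^ 2) = (1 - t ^ 2) * (1 + s ^ 2) := by
      rw [sub_eq_zero, div_eq_div_iff ps pt] at h3
      exact h3
    have h6 : 2 * s * (1 + t ^ 2) = 2 * t * (1 + s ^ 2) := by
      rw [sub_eq_zero, div_eq_div_iff ps pt] at h4
      exact h4
    have h7 : s ^ 2 = t ^ 2 := by linarith
    rw [h7] at h6
    have := mul_right_cancel₀ pt h6
    linarith
  have key := circle_sub_of_three h h' (p1 := circ c U W 0) (p2 := circ c U W 1)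
    (p3 := circ c U W 2) (fun e => by have := hinj e; norm_num at this)
    (fun e => by have := hinj e; norm_num at this) (fun e => by have := hinj e; norm_num at this)
    (hcon _ (circ_mem hF _)) (hcon _ (circ_mem hF _)) (hcon _ (circ_mem hF _))
    (circ_mem hF _) (circ_mem hF _) (circ_mem hF _)
  exact hne (Set.Subset.antisymm key hcon)

theorem generic_proj (C : Finset (Set (Fin 3 → ℝ))) (hC : ∀ γ ∈ C, IsCircle γ) :
    ∃ a b : ℝ, ∀ f : MvPolynomial (Fin 2) ℝ, f ≠ 0 →
      (C.filter fun γ => γ ⊆ zeroSet (projA a b f)).card ≤ f.totalDegree := by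
  have hdata : ∀ γ : Set (Fin 3 → ℝ), ∃ (c v : Fin 3 → ℝ) (ρ : ℝ), γ ∈ C → 0 < ρ ∧ v ≠ 0 ∧
      γ = {x | (∑ i, (x i - c i) ^ 2) = ρ ^ 2 ∧ (∑ i, v i * (x i - c i)) = 0} := by
    intro γ
    by_cases h : γ ∈ C
    · obtain ⟨c, v, ρ, h1, h2, h3⟩ := hC γ h
      exact ⟨c, v, ρ, fun _ => ⟨h1, h2, h3⟩⟩
    · exact ⟨0, 0, 0, fun h' => absurd h' h⟩
  choose c v ρ hcv using hdata
  have hpoly : ∀ k : Set (Fin 3 → ℝ) × Set (Fin 3 → ℝ), ∃ F : MvPolynomial (Fin 2) ℝ,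
      k ∈ C ×ˢ C → (∃ x, MvPolynomial.eval x F ≠ 0) ∧ ∀ x, MvPolynomial.eval x F ≠ 0 →
        v k.1 0 * x 0 + v k.1 1 * x 1 + v k.1 2 ≠ 0 ∧
        (k.1 ≠ k.2 → ∃ p ∈ k.2, qform (c k.1) (v k.1) (ρ k.1) p (x 0) (x 1) ≠ 0) := by
    rintro ⟨γ, γ'⟩
    by_cases hk : (γ, γ') ∈ C ×ˢ C
    · rw [Finset.mem_product] at hk
      obtain ⟨hρ, hv, hγ⟩ := hcv γ hk.1
      obtain ⟨L, hL⟩ := lin_poly (v γ)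
      have hLne : L ≠ 0 := by
        intro h0
        simp only [h0, map_zero] at hL
        apply hv
        have h2 := hL ![0, 0]
        have h1 := hL ![0, 1]
        have h3 := hL ![1, 0]
        simp at h1 h2 h3
        ext i
        fin_cases i
        · change v γ 0 = 0
          linarith
        · change v γ 1 = 0
          linarith
        · change v γ 2 = 0
          linarith
      by_cases hne : γ = γ'
      · refine ⟨L, fun _ => ⟨?_, fun x hx => ⟨by rw [← hL]; exact hx, fun h => absurd hne h⟩⟩⟩
        by_contra hcon
        push Not at hcon
        exact hLne (MvPolynomial.funext fun x => by rw [hcon, map_zero])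
      · obtain ⟨p, hp, hpγ⟩ := circle_not_subset (hC γ hk.1) (hC γ' hk.2) hne
        obtain ⟨Q, hQ⟩ := qform_poly (c γ) (v γ) (ρ γ) p
        obtain ⟨a, b, hab⟩ := qform_generic (c γ) (v γ) (ρ γ) hρ hv p (by
          rw [hγ] at hpγ; exact hpγ)
        have hQne : Q ≠ 0 := by
          intro h0
          have := hQ ![a, b]
          rw [h0, map_zero] at this
          exact hab this.symm
        refine ⟨L * Q, fun _ => ⟨?_, fun x hx => ?_⟩⟩
        · by_contra hcon
          push Not at hcon
          exact mul_ne_zero hLne hQne (MvPolynomial.funext fun x => by rw [hcon, map_zero])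
        · rw [map_mul, mul_ne_zero_iff, hL, hQ] at hx
          exact ⟨hx.1, fun _ => ⟨p, hp, hx.2⟩⟩
    · exact ⟨0, fun h => absurd h hk⟩
  choose F hF using hpoly
  obtain ⟨x, hx⟩ := generic_point (C ×ˢ C) F fun k hk => (hF k hk).1
  refine ⟨x 0, x 1, ?_⟩
  have main : ∀ n : ℕ, ∀ C' ⊆ C, ∀ f : MvPolynomial (Fin 2) ℝ, f ≠ 0 → f.totalDegree ≤ n →
      (∀ γ ∈ C', γ ⊆ zeroSet (projA (x 0) (x 1) f)) → C'.card ≤ n := by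
    intro n
    induction n with
    | zero =>
      intro C' hC' f hf hd hz
      rw [Nat.le_zero, Finset.card_eq_zero, Finset.eq_empty_iff_forall_notMem]
      intro γ hγ
      obtain ⟨hρ, hv, hγe⟩ := hcv γ (hC' hγ)
      have hg := (hF (γ, γ) (Finset.mem_product.2 ⟨hC' hγ, hC' hγ⟩)).2 x
        (hx _ (Finset.mem_product.2 ⟨hC' hγ, hC' hγ⟩))
      obtain ⟨e, he0, hed, hdiv, -⟩ := circle_conic (c γ) (v γ) (ρ γ) hρ (x 0) (x 1) hg.1 γ hγe
      obtain ⟨h, rfl⟩ := hdiv f (hz γ hγ)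
      rw [MvPolynomial.totalDegree_mul_of_isDomain he0 (right_ne_zero_of_mul hf)] at hd
      omega
    | succ n ih =>
      intro C' hC' f hf hd hz
      rcases C'.eq_empty_or_nonempty with rfl | ⟨γ, hγ⟩
      · simp
      obtain ⟨hρ, hv, hγe⟩ := hcv γ (hC' hγ)
      have hg : ∀ γ' ∈ C, _ := fun γ' hγ' => (hF (γ, γ') (Finset.mem_product.2 ⟨hC' hγ, hγ'⟩)).2 x
        (hx _ (Finset.mem_product.2 ⟨hC' hγ, hγ'⟩))
      obtain ⟨e, he0, hed, hdiv, hq⟩ := circle_conic (c γ) (v γ) (ρ γ) hρ (x 0) (x 1)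
        (hg γ (hC' hγ)).1 γ hγe
      obtain ⟨h, rfl⟩ := hdiv f (hz γ hγ)
      have hh := right_ne_zero_of_mul hf
      rw [MvPolynomial.totalDegree_mul_of_isDomain he0 hh] at hd
      have := ih (C'.erase γ) ((Finset.erase_subset _ _).trans hC') h hh (by omega) ?_
      · rw [Finset.card_erase_of_mem hγ] at this
        omega
      · intro γ' hγ'
        rw [Finset.mem_erase] at hγ'
        have hz' := hz γ' hγ'.2
        rw [map_mul] at hz'
        rcases circle_mul (hC γ' (hC' hγ'.2)) _ _ hz' with h1 | h1
        · exfalso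
          obtain ⟨p, hp, hpq⟩ := (hg γ' (hC' hγ'.2)).2 (Ne.symm hγ'.1)
          apply hpq
          apply hq
          have := h1 hp
          rw [zeroSet, Set.mem_ofPred_eq, projA_eval] at this
          exact this
        · exact h1
  intro f hf
  exact main _ _ (Finset.filter_subset _ _) f hf le_rfl fun γ hγ => (Finset.mem_filter.1 hγ).2

theorem power_sum {ι : Type*} (S : Finset ι) (x y : ι → ℝ) (T m Y e b : ℝ)
    (hx : ∀ s ∈ S, 0 ≤ x s) (hy : ∀ s, 0 ≤ y s) (hS : (S.card : ℝ) ≤ T)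
    (hT : 0 < T) (hxm : ∀ s ∈ S, x s ≤ m / T) (hY : ∑ s ∈ S, y s ≤ Y) (he : 0 ≤ e)
    (hb : 0 < b) (hb1 : b ≤ 1) (hm : 0 ≤ m) :
    ∑ s ∈ S, x s ^ e * y s ^ b ≤ (m / T) ^ e * (T ^ (1 - b) * Y ^ b) := by
  have h1 : ∑ s ∈ S, x s ^ e * y s ^ b ≤ (m / T) ^ e * ∑ s ∈ S, y s ^ b := by
    rw [Finset.mul_sum]
    refine Finset.sum_le_sum fun s hs => ?_
    exact mul_le_mul_of_nonneg_right (Real.rpow_le_rpow (hx s hs) (hxm s hs) he)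
      (Real.rpow_nonneg (hy s) _)
  refine h1.trans (mul_le_mul_of_nonneg_left ?_ (by positivity))
  have hsum0 : 0 ≤ ∑ s ∈ S, y s := Finset.sum_nonneg fun s _ => hy s
  have hY0 : 0 ≤ Y := hsum0.trans hY
  have hp : 1 ≤ 1 / b := by rw [le_div_iff₀ hb]; linarith
  have h2 := Real.rpow_sum_le_const_mul_sum_rpow S (fun s => y s ^ b) hp
  have h3 : ∀ s, |y s ^ b| = y s ^ b := fun s => abs_of_nonneg (Real.rpow_nonneg (hy s) _)
  have h4 : ∀ s, (y s ^ b) ^ (1 / b) = y s := fun s => by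
    rw [← Real.rpow_mul (hy s), mul_one_div_cancel hb.ne', Real.rpow_one]
  simp only [h3, h4] at h2
  have hz : 0 ≤ ∑ s ∈ S, y s ^ b := Finset.sum_nonneg fun s _ => Real.rpow_nonneg (hy s) _
  have h5 : (∑ s ∈ S, y s ^ b) ^ (1 / b) ≤ T ^ (1 / b - 1) * Y :=
    h2.trans (mul_le_mul (Real.rpow_le_rpow (by positivity) hS (by linarith)) hY hsum0
      (by positivity))
  have h6 := Real.rpow_le_rpow (by positivity) h5 hb.le
  rw [← Real.rpow_mul hz, one_div_mul_cancel hb.ne', Real.rpow_one,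
    Real.mul_rpow (by positivity) hY0, ← Real.rpow_mul hT.le] at h6
  have h7 : (1 / b - 1) * b = 1 - b := by field_simp
  rw [h7] at h6
  exact h6

theorem power_sum' {ι : Type*} (S : Finset ι) (x y : ι → ℝ) (N m n K a b ε : ℝ) (d : ℕ)
    (hx : ∀ s ∈ S, 0 ≤ x s) (hy : ∀ s, 0 ≤ y s) (hS : (S.card : ℝ) ≤ N ^ d)
    (hN : 0 < N) (hK : 1 ≤ K) (hxm : ∀ s ∈ S, x s ≤ m / N ^ d)
    (hY : ∑ s ∈ S, y s ≤ K * N * n) (ha : 0 ≤ a) (hε : 0 < ε)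
    (hb : 0 < b) (hb1 : b ≤ 1) (hm : 0 ≤ m) (hn : 0 ≤ n) (hab : d * a = d - d * b + b)
    (hsmall : K * N ^ (-(d * ε)) ≤ 1 / 2) :
    ∑ s ∈ S, x s ^ (a + ε) * y s ^ b ≤ 1 / 2 * (m ^ (a + ε) * n ^ b) := by
  have h := power_sum S x y (N ^ d) m (K * N * n) (a + ε) b hx hy hS (by positivity) hxm hY
    (by linarith) hb hb1 hm
  refine h.trans ?_
  have e1 : (m / N ^ d) ^ (a + ε) * ((N ^ d) ^ (1 - b) * (K * N * n) ^ b)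
      = K ^ b * N ^ (-(d * ε)) * (m ^ (a + ε) * n ^ b) := by
    rw [Real.div_rpow hm (by positivity), Real.mul_rpow (by positivity) hn,
      Real.mul_rpow (by positivity) hN.le, ← Real.rpow_natCast, ← Real.rpow_mul hN.le,
      ← Real.rpow_mul hN.le]
    have e2 : N ^ (-(d * ε)) = N ^ (d * (1 - b)) * N ^ b / N ^ (d * (a + ε)) := by
      rw [← Real.rpow_add hN, ← Real.rpow_sub hN]
      congr 1
      linear_combination hab
    rw [e2]
    field_simp
  rw [e1]
  refine mul_le_mul_of_nonneg_right (le_trans ?_ hsmall) (by positivity)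
  refine mul_le_mul_of_nonneg_right ?_ (by positivity)
  calc K ^ b ≤ K ^ (1 : ℝ) := Real.rpow_le_rpow_of_exponent_le hK hb1
    _ = K := Real.rpow_one K

/-- The abstract divide-and-conquer recursion. -/
theorem recursion (d : ℕ) (ε a b a' b' N K L : ℝ) (hε : 0 < ε) (ha : 0 ≤ a) (ha' : 0 ≤ a')
    (hb : 0 < b) (hb1 : b < 1) (hb' : 0 < b') (hb1' : b' ≤ 1)
    (hab : d * a = d - d * b + b) (hab' : d * a' = d - d * b' + b') (hkst : a = 3 * (1 - b))
    (hN : 2 ≤ N) (hd : 1 ≤ d) (hK : 1 ≤ K) (hL : 0 ≤ L)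
    (hsmall : K * N ^ (-(d * ε)) ≤ 1 / 2) :
    ∃ α : ℝ, 0 < α ∧ ∀ (Q : ℝ) (H : Finset (Set (Fin 3 → ℝ)) → Prop), 0 ≤ Q →
      (∀ P C, H C → Incidences P C ≤ 2 * C.card + P.card ^ 3) →
      (∀ P C, H C → ∃ (S : Finset (Finset ℕ)) (Ps : Finset ℕ → Finset (Fin 3 → ℝ))
        (Cs : Finset ℕ → Finset (Set (Fin 3 → ℝ))) (m₀ : ℝ),
        0 ≤ m₀ ∧ (S.card : ℝ) ≤ N ^ d ∧ (∀ s, H (Cs s)) ∧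
        (∀ s ∈ S, ((Ps s).card : ℝ) ≤ P.card / N ^ d) ∧
        ∑ s ∈ S, ((Cs s).card : ℝ) ≤ K * N * C.card ∧
        ∑ s ∈ S, ((Ps s).card : ℝ) + m₀ ≤ P.card ∧
        (Incidences P C : ℝ) ≤ ∑ s ∈ S, (Incidences (Ps s) (Cs s) : ℝ)
          + L * (Q * ((P.card : ℝ) ^ (a' + ε) * (C.card : ℝ) ^ b') + m₀ + C.card)) →
      ∀ P C, H C → (Incidences P C : ℝ) ≤ α * ((P.card : ℝ) ^ (a + ε) * (C.card : ℝ) ^ b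
        + Q * ((P.card : ℝ) ^ (a' + ε) * (C.card : ℝ) ^ b') + P.card + C.card) := by
  have hN0 : 0 < N := by linarith
  set K' := 2 * (K * N + 1) with hK'
  have hK'0 : 0 < K' := by positivity
  set E := K' ^ (1 / (1 - b)) with hE
  have hE0 : 0 < E := by positivity
  refine ⟨2 + 2 * L + E, by positivity, ?_⟩
  set α := 2 + 2 * L + E with hα
  have hα0 : 0 < α := by positivity
  intro Q H hQ hKST hpart
  suffices hmain : ∀ k : ℕ, ∀ P C, P.card ≤ k → H C → (Incidences P C : ℝ) ≤
      α * ((P.card : ℝ) ^ (a + ε) * (C.card : ℝ) ^ b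
        + Q * ((P.card : ℝ) ^ (a' + ε) * (C.card : ℝ) ^ b') + P.card + C.card) from
    fun P C hC => hmain P.card P C le_rfl hC
  intro k
  induction k with
  | zero =>
    intro P C hP hC
    have h0 : Incidences P C = 0 := by
      have := incidences_le_mul P C
      rw [Nat.le_zero.1 hP] at this
      omega
    rw [h0, Nat.cast_zero]
    positivity
  | succ k ih =>
    intro P C hP hC
    rcases Nat.eq_zero_or_pos P.card with hm0 | hm0
    · exact ih P C (by omega) hC
    set m : ℝ := (P.card : ℝ) with hm
    set n : ℝ := (C.card : ℝ) with hn
    have hm1 : 1 ≤ m := by rw [hm]; exact_mod_cast hm0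
    have hn0 : 0 ≤ n := by rw [hn]; positivity
    have hX0 : 0 ≤ m ^ (a + ε) * n ^ b := by positivity
    have hY0 : 0 ≤ Q * (m ^ (a' + ε) * n ^ b') := by positivity
    by_cases hcase : m ^ 3 < E * n
    · have h1 : (Incidences P C : ℝ) ≤ 2 * n + m ^ 3 := by
        rw [hm, hn]; exact_mod_cast hKST P C hC
      have h2 : (Incidences P C : ℝ) ≤ α * n := by
        have : 0 ≤ L * n := by positivity
        rw [hα]
        nlinarith
      refine h2.trans (mul_le_mul_of_nonneg_left ?_ hα0.le)
      linarith
    · have hcase := not_lt.1 hcase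
      have hnX : (K * N + 1) * n ≤ 1 / 2 * (m ^ (a + ε) * n ^ b) := by
        rcases hn0.eq_or_lt with hz | hpos
        · rw [← hz, mul_zero, Real.zero_rpow hb.ne', mul_zero, mul_zero]
        have h1 : (E * n) ^ (1 - b) ≤ (m ^ 3) ^ (1 - b) :=
          Real.rpow_le_rpow (by positivity) hcase (by linarith)
        have hb1n : 1 - b ≠ 0 := by linarith
        have h2 : E ^ (1 - b) = K' := by
          rw [hE, ← Real.rpow_mul hK'0.le, one_div_mul_cancel hb1n, Real.rpow_one]
        have h3 : (m ^ 3) ^ (1 - b) = m ^ a := by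
          rw [← Real.rpow_natCast, ← Real.rpow_mul (by positivity), hkst]
          norm_num
        rw [Real.mul_rpow hE0.le hn0, h2, h3] at h1
        have h4 : m ^ a ≤ m ^ (a + ε) := Real.rpow_le_rpow_of_exponent_le hm1 (by linarith)
        have h5 : n ^ (1 - b) * n ^ b = n := by
          rw [← Real.rpow_add hpos, sub_add_cancel, Real.rpow_one]
        have h6 : K' * n ≤ m ^ (a + ε) * n ^ b := by
          calc K' * n = K' * n ^ (1 - b) * n ^ b := by linear_combination -K' * h5
            _ ≤ m ^ (a + ε) * n ^ b :=
              mul_le_mul_of_nonneg_right (h1.trans h4) (by positivity)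
        rw [hK'] at h6
        linarith
      obtain ⟨S, Ps, Cs, m₀, hm₀, hS, hHs, hPs, hCs, hPsum, hI⟩ := hpart P C hC
      have hNd : 2 ≤ N ^ d := by
        calc (2 : ℝ) ≤ N := hN
          _ = N ^ 1 := (pow_one N).symm
          _ ≤ N ^ d := pow_le_pow_right₀ (by linarith) hd
      have hsmaller : ∀ s ∈ S, (Ps s).card ≤ k := by
        intro s hs
        have h1 := hPs s hs
        have h2 : m / N ^ d ≤ m / 2 := div_le_div_of_nonneg_left (by linarith) (by norm_num) hNd
        have h3 : ((Ps s).card : ℝ) < P.card := by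
          have : ((Ps s).card : ℝ) ≤ m / 2 := h1.trans h2
          rw [← hm]
          linarith
        have h4 : (Ps s).card < P.card := by exact_mod_cast h3
        omega
      have hsum : ∑ s ∈ S, (Incidences (Ps s) (Cs s) : ℝ) ≤
          ∑ s ∈ S, α * (((Ps s).card : ℝ) ^ (a + ε) * ((Cs s).card : ℝ) ^ b
        + Q * (((Ps s).card : ℝ) ^ (a' + ε) * ((Cs s).card : ℝ) ^ b') + (Ps s).card + (Cs s).card) :=
        Finset.sum_le_sum fun s hs => ih _ _ (hsmaller s hs) (hHs s)
      rw [← Finset.mul_sum, Finset.sum_add_distrib, Finset.sum_add_distrib,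
        Finset.sum_add_distrib, ← Finset.mul_sum] at hsum
      have hA := power_sum' S (fun s => ((Ps s).card : ℝ)) (fun s => ((Cs s).card : ℝ)) N m n K a b ε d
        (fun s _ => by positivity) (fun s => by positivity) hS hN0 hK hPs hCs ha hε hb hb1.le
        (by linarith) hn0 hab hsmall
      have hB := power_sum' S (fun s => ((Ps s).card : ℝ)) (fun s => ((Cs s).card : ℝ)) N m n K a' b' ε d
        (fun s _ => by positivity) (fun s => by positivity) hS hN0 hK hPs hCs ha' hε hb' hb1'
        (by linarith) hn0 hab' hsmall
      have hB' := mul_le_mul_of_nonneg_left hB hQ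
      set X := m ^ (a + ε) * n ^ b with hX
      set Y := Q * (m ^ (a' + ε) * n ^ b') with hY
      have hLα : L ≤ α / 2 := by rw [hα]; linarith
      have hrest : L * (Y + m₀ + n) ≤ α / 2 * (Y + m₀ + n) :=
        mul_le_mul_of_nonneg_right hLα (by linarith)
      refine hI.trans ((add_le_add hsum hrest).trans ?_)
      have : α / 2 * (Y + m₀ + n) = α * ((Y + m₀ + n) / 2) := by ring
      rw [this, ← mul_add]
      refine mul_le_mul_of_nonneg_left ?_ hα0.le
      have hB'' : Q * (1 / 2 * (m ^ (a' + ε) * n ^ b')) = Y / 2 := by rw [hY]; ring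
      rw [hB''] at hB'
      have hnX' : K * N * n + n ≤ 1 / 2 * X := by linarith
      linarith

theorem part_common (d M : ℕ) (P : Finset (Fin 3 → ℝ)) (C : Finset (Set (Fin 3 → ℝ)))
    (hC : ∀ γ ∈ C, IsCircle γ) (g : ℕ → MvPolynomial (Fin 3) ℝ)
    (hD : ∑ j ∈ Finset.range (d * M), (g j).totalDegree ≤ 2 * d ^ 2 * 2 ^ M)
    (hcell : ∀ s ⊆ Finset.range (d * M),
        (P.filter fun x => InCell g (d * M) s x).card * 2 ^ (d * M) ≤ P.card) :
    ∃ (S : Finset (Finset ℕ)) (Ps : Finset ℕ → Finset (Fin 3 → ℝ))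
        (Cs : Finset ℕ → Finset (Set (Fin 3 → ℝ))) (P₀ : Finset (Fin 3 → ℝ)),
        (S.card : ℝ) ≤ ((2 : ℝ) ^ M) ^ d ∧ (∀ s, Cs s ⊆ C) ∧
        (∀ s ∈ S, ((Ps s).card : ℝ) ≤ P.card / ((2 : ℝ) ^ M) ^ d) ∧
        ∑ s ∈ S, ((Cs s).card : ℝ) ≤ (4 * d ^ 2 + 2) * 2 ^ M * C.card ∧
        ∑ s ∈ S, ((Ps s).card : ℝ) + P₀.card ≤ P.card ∧
        (Incidences P C : ℝ) ≤ ∑ s ∈ S, (Incidences (Ps s) (Cs s) : ℝ)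
          + (Incidences P₀ (C.filter fun γ => γ ⊆
            zeroSet (∏ j ∈ Finset.range (d * M), g j)) : ℝ)
          + (2 * (2 * d ^ 2 * 2 ^ M) + 1) * C.card := by
  obtain ⟨Cs, hCs, hCsum, hI⟩ := decomp P C hC g (d * M) _ hD
  set G := ∏ j ∈ Finset.range (d * M), g j with hG
  refine ⟨(Finset.range (d * M)).powerset, fun s => P.filter fun p => InCell g (d * M) s p, Cs,
    P.filter fun p => MvPolynomial.eval p G = 0, ?_, hCs, ?_, ?_, ?_, ?_⟩
  · rw [Finset.card_powerset, Finset.card_range, ← pow_mul, mul_comm M d]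
    push_cast
    exact le_rfl
  · intro s hs
    rw [← pow_mul, mul_comm M d, le_div_iff₀ (by positivity)]
    exact_mod_cast hcell s (Finset.mem_powerset.1 hs)
  · have h1 : ∑ s ∈ (Finset.range (d * M)).powerset, ((Cs s).card : ℝ)
        ≤ (2 * (2 * d ^ 2 * 2 ^ M) + 2) * C.card := by exact_mod_cast hCsum
    refine h1.trans (mul_le_mul_of_nonneg_right ?_ (by positivity))
    have : (1 : ℝ) ≤ 2 ^ M := one_le_pow₀ (by norm_num)
    nlinarith
  · have hdisj : ∑ s ∈ (Finset.range (d * M)).powerset,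
        (P.filter fun p => InCell g (d * M) s p).card
        ≤ (P.filter fun p => ¬ MvPolynomial.eval p G = 0).card := by
      rw [← Finset.card_biUnion]
      · refine Finset.card_le_card ?_
        intro p hp
        obtain ⟨s, hs, hp⟩ := Finset.mem_biUnion.1 hp
        rw [Finset.mem_filter] at hp ⊢
        exact ⟨hp.1, hp.2.ne⟩
      · intro s hs s' hs' hne
        rw [Function.onFun, Finset.disjoint_left]
        intro p hp hp'
        rw [Finset.mem_filter] at hp hp'
        exact hne (InCell.unique (Finset.mem_powerset.1 hs) (Finset.mem_powerset.1 hs') hp.2 hp'.2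
          fun _ _ => Iff.rfl)
    have hsum := Finset.card_filter_add_card_filter_not (s := P) (fun p => MvPolynomial.eval p G = 0)
    have : ∑ s ∈ (Finset.range (d * M)).powerset, (P.filter fun p => InCell g (d * M) s p).card
      + (P.filter fun p => MvPolynomial.eval p G = 0).card ≤ P.card := by omega
    exact_mod_cast this
  · exact_mod_cast hI

theorem choose_M (d : ℕ) (hd : 1 ≤ d) (ε : ℝ) (hε : 0 < ε) (K : ℝ) (hK : 1 ≤ K) :
    ∃ M : ℕ, 1 ≤ M ∧ K * ((2 : ℝ) ^ M) ^ (-(d * ε)) ≤ 1 / 2 := by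
  have hd' : (0 : ℝ) < d := by exact_mod_cast hd
  have h1 : (2 : ℝ) ^ (-(d * ε)) < 1 :=
    Real.rpow_lt_one_of_one_lt_of_neg (by norm_num) (by simp; positivity)
  obtain ⟨M, hM⟩ := exists_pow_lt_of_lt_one (show (0 : ℝ) < 1 / (2 * K) by positivity) h1
  have h0 : (0 : ℝ) < 2 ^ (-(d * ε)) := by positivity
  refine ⟨M + 1, by omega, ?_⟩
  have e : ((2 : ℝ) ^ (M + 1)) ^ (-(d * ε)) = ((2 : ℝ) ^ (-(d * ε))) ^ (M + 1) := by
    rw [← Real.rpow_natCast, ← Real.rpow_natCast, ← Real.rpow_mul (by norm_num),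
      ← Real.rpow_mul (by norm_num), mul_comm]
  rw [e, pow_succ]
  have h2 : ((2 : ℝ) ^ (-(d * ε))) ^ M * 2 ^ (-(d * ε)) ≤ 1 / (2 * K) := by
    have : ((2 : ℝ) ^ (-(d * ε))) ^ M * 2 ^ (-(d * ε)) ≤ ((2 : ℝ) ^ (-(d * ε))) ^ M * 1 :=
      mul_le_mul_of_nonneg_left h1.le (by positivity)
    linarith
  calc K * _ ≤ K * (1 / (2 * K)) := mul_le_mul_of_nonneg_left h2 (by linarith)
    _ = 1 / 2 := by field_simp

theorem planar_bound (ε : ℝ) (hε : 0 < ε) : ∃ α : ℝ, 0 < α ∧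
    ∀ (P : Finset (Fin 3 → ℝ)) (C : Finset (Set (Fin 3 → ℝ))), (∀ γ ∈ C, IsCircle γ) →
      (Incidences P C : ℝ) ≤ α * ((P.card : ℝ) ^ ((3 : ℝ) / 5 + ε) * (C.card : ℝ) ^ ((4 : ℝ) / 5)
        + P.card + C.card) := by
  set K : ℝ := 4 * ((2 : ℕ) : ℝ) ^ 2 + 2 with hK
  have hK1 : 1 ≤ K := by rw [hK]; norm_num
  obtain ⟨M, hM, hsmall⟩ := choose_M 2 (by norm_num) ε hε K hK1
  set L : ℝ := 2 * (2 * ((2 : ℕ) : ℝ) ^ 2 * 2 ^ M) + 1 with hL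
  have hN : (2 : ℝ) ≤ 2 ^ M := by
    calc (2 : ℝ) = 2 ^ 1 := by norm_num
      _ ≤ 2 ^ M := pow_le_pow_right₀ (by norm_num) hM
  obtain ⟨α, hα, hrec⟩ := recursion 2 ε (3 / 5) (4 / 5) (3 / 5) (4 / 5) (2 ^ M) K L hε
    (by norm_num) (by norm_num) (by norm_num) (by norm_num) (by norm_num) (by norm_num)
    (by norm_num) (by norm_num) (by norm_num) hN (by norm_num) hK1 (by positivity) hsmall
  refine ⟨α, hα, fun P C hC => ?_⟩
  have := hrec 0 (fun C => ∀ γ ∈ C, IsCircle γ) le_rfl (fun P C hC => kst P C hC) ?_ P C hC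
  · simpa using this
  intro P C hC
  obtain ⟨a, b, hab⟩ := generic_proj C hC
  obtain ⟨g, hg0, hgd, hgc⟩ := poly_partition' (by norm_num : 0 < 2) (proj a b) P M
  have hin : ∀ s x, InCell (fun j => projA a b (g j)) (2 * M) s x ↔ InCell g (2 * M) s (proj a b x) := by
    intro s x
    simp only [InCell, projA_eval]
  obtain ⟨S, Ps, Cs, P₀, h1, h2, h3, h4, h5, h6⟩ := part_common 2 M P C hC
    (fun j => projA a b (g j)) (le_trans (Finset.sum_le_sum fun j _ => projA_degree a b _) hgd) (by
      intro s hs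
      simp only [hin]
      exact hgc s hs)
  refine ⟨S, Ps, Cs, P₀.card, by positivity, h1, fun s γ hγ => hC γ (h2 s hγ), h3, h4, h5, ?_⟩
  refine h6.trans ?_
  rw [add_assoc, zero_mul, zero_add, mul_add]
  refine add_le_add le_rfl (add_le_add ?_ le_rfl)
  rw [← map_prod]
  have hcard := hab (∏ j ∈ Finset.range (2 * M), g j)
    (Finset.prod_ne_zero_iff.2 fun j hj => hg0 j (Finset.mem_range.1 hj))
  have hdeg := (MvPolynomial.totalDegree_finsetProd (Finset.range (2 * M)) g).trans hgd
  have hinc := incidences_le_mul P₀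
    (C.filter fun γ => γ ⊆ zeroSet (projA a b (∏ j ∈ Finset.range (2 * M), g j)))
  have hfin : Incidences P₀
    (C.filter fun γ => γ ⊆ zeroSet (projA a b (∏ j ∈ Finset.range (2 * M), g j)))
      ≤ P₀.card * (2 * 2 ^ 2 * 2 ^ M) := hinc.trans (Nat.mul_le_mul_left _ (hcard.trans hdeg))
  have hfin' : (Incidences P₀
    (C.filter fun γ => γ ⊆ zeroSet (projA a b (∏ j ∈ Finset.range (2 * M), g j))) : ℝ)
      ≤ P₀.card * (2 * 2 ^ 2 * 2 ^ M) := by exact_mod_cast hfin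
  refine hfin'.trans ?_
  rw [mul_comm]
  refine mul_le_mul_of_nonneg_right ?_ (by positivity)
  rw [hL]
  have : (0 : ℝ) < 2 ^ M := by positivity
  push_cast
  linarith

theorem spatial_bound (ε : ℝ) (hε : 0 < ε) :
    ∃ c : ℕ, ∃ α : ℝ, 0 < α ∧
      ∀ (P : Finset (Fin 3 → ℝ)) (C : Finset (Set (Fin 3 → ℝ))) (q₂ : ℕ),
        (∀ γ ∈ C, IsCircle γ) →
        (∀ f : MvPolynomial (Fin 3) ℝ, f ≠ 0 → f.totalDegree ≤ c →
            (C.filter fun γ => γ ⊆ zeroSet f).card ≤ q₂) →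
        (Incidences P C : ℝ) ≤ α * ((P.card : ℝ) ^ ((3 : ℝ) / 7 + ε) * (C.card : ℝ) ^ ((6 : ℝ) / 7)
          + (q₂ : ℝ) ^ ((1 : ℝ) / 5) * ((P.card : ℝ) ^ ((3 : ℝ) / 5 + ε) * (C.card : ℝ) ^ ((3 : ℝ) / 5))
          + (P.card : ℝ) + (C.card : ℝ)) := by
  obtain ⟨α₂, hα₂, hplan⟩ := planar_bound ε hε
  set K : ℝ := 4 * ((3 : ℕ) : ℝ) ^ 2 + 2 with hK
  have hK1 : 1 ≤ K := by rw [hK]; norm_num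
  obtain ⟨M, hM, hsmall⟩ := choose_M 3 (by norm_num) ε hε K hK1
  set L : ℝ := α₂ + (2 * (2 * ((3 : ℕ) : ℝ) ^ 2 * 2 ^ M) + 1) with hL
  have hN : (2 : ℝ) ≤ 2 ^ M := by
    calc (2 : ℝ) = 2 ^ 1 := by norm_num
      _ ≤ 2 ^ M := pow_le_pow_right₀ (by norm_num) hM
  obtain ⟨α, hα, hrec⟩ := recursion 3 ε (3 / 7) (6 / 7) (3 / 5) (3 / 5) (2 ^ M) K L hε
    (by norm_num) (by norm_num) (by norm_num) (by norm_num) (by norm_num) (by norm_num)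
    (by norm_num) (by norm_num) (by norm_num) hN (by norm_num) hK1 (by positivity) hsmall
  refine ⟨2 * 3 ^ 2 * 2 ^ M, α, hα, fun P C q₂ hC hq => ?_⟩
  refine hrec ((q₂ : ℝ) ^ ((1 : ℝ) / 5)) (fun C => (∀ γ ∈ C, IsCircle γ) ∧
    ∀ f : MvPolynomial (Fin 3) ℝ, f ≠ 0 → f.totalDegree ≤ 2 * 3 ^ 2 * 2 ^ M →
            (C.filter fun γ => γ ⊆ zeroSet f).card ≤ q₂) (by positivity)
    (fun P C hC => kst P C hC.1) ?_ P C ⟨hC, hq⟩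
  rintro P C ⟨hC, hq⟩
  obtain ⟨g, hg0, hgd, hgc⟩ := poly_partition' (by norm_num : 0 < 3) (fun x => x) P M
  obtain ⟨S, Ps, Cs, P₀, h1, h2, h3, h4, h5, h6⟩ := part_common 3 M P C hC g hgd hgc
  refine ⟨S, Ps, Cs, P₀.card, by positivity, h1, fun s => ⟨fun γ hγ => hC γ (h2 s hγ),
    fun f hf hfd => ?_⟩, h3, h4, h5, ?_⟩
  · exact (Finset.card_le_card (Finset.filter_subset_filter _ (h2 s))).trans (hq f hf hfd)
  refine h6.trans ?_
  set G := ∏ j ∈ Finset.range (3 * M), g j with hG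
  set Cin := C.filter fun γ => γ ⊆ zeroSet G with hCin
  have hG0 : G ≠ 0 := Finset.prod_ne_zero_iff.2 fun j hj => hg0 j (Finset.mem_range.1 hj)
  have hGd : G.totalDegree ≤ 2 * 3 ^ 2 * 2 ^ M :=
    (MvPolynomial.totalDegree_finsetProd (Finset.range (3 * M)) g).trans hgd
  have hCq : (Cin.card : ℝ) ≤ q₂ := by exact_mod_cast hq G hG0 hGd
  have hCn : (Cin.card : ℝ) ≤ C.card := by
    exact_mod_cast Finset.card_le_card (Finset.filter_subset _ _)
  have hp := hplan P₀ Cin fun γ hγ => hC γ (Finset.mem_filter.1 hγ).1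
  have hP₀ : (P₀.card : ℝ) ≤ P.card := by
    have : (0 : ℝ) ≤ ∑ s ∈ S, ((Ps s).card : ℝ) := Finset.sum_nonneg fun s _ => by positivity
    linarith
  have hq45 : (Cin.card : ℝ) ^ ((4 : ℝ) / 5)
      ≤ (C.card : ℝ) ^ ((3 : ℝ) / 5) * (q₂ : ℝ) ^ ((1 : ℝ) / 5) := by
    have e : (Cin.card : ℝ) ^ ((4 : ℝ) / 5)
        = (Cin.card : ℝ) ^ ((3 : ℝ) / 5) * (Cin.card : ℝ) ^ ((1 : ℝ) / 5) := by
      rw [← Real.rpow_add_of_nonneg (by positivity) (by norm_num) (by norm_num)]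
      norm_num
    rw [e]
    exact mul_le_mul (Real.rpow_le_rpow (by positivity) hCn (by norm_num))
      (Real.rpow_le_rpow (by positivity) hCq (by norm_num)) (by positivity) (by positivity)
  have hXY : (P₀.card : ℝ) ^ ((3 : ℝ) / 5 + ε) * (Cin.card : ℝ) ^ ((4 : ℝ) / 5)
      ≤ (q₂ : ℝ) ^ ((1 : ℝ) / 5) * ((P.card : ℝ) ^ ((3 : ℝ) / 5 + ε) * (C.card : ℝ) ^ ((3 : ℝ) / 5)) := by
    calc _ ≤ (P.card : ℝ) ^ ((3 : ℝ) / 5 + ε) *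
          ((C.card : ℝ) ^ ((3 : ℝ) / 5) * (q₂ : ℝ) ^ ((1 : ℝ) / 5)) :=
        mul_le_mul (Real.rpow_le_rpow (by positivity) hP₀ (by linarith)) hq45 (by positivity)
          (by positivity)
      _ = _ := by ring
  set Y := (q₂ : ℝ) ^ ((1 : ℝ) / 5) * ((P.card : ℝ) ^ ((3 : ℝ) / 5 + ε) * (C.card : ℝ) ^ ((3 : ℝ) / 5))
    with hY
  have hY0 : 0 ≤ Y := by positivity
  rw [add_assoc]
  refine add_le_add le_rfl ?_
  have hb : (Incidences P₀ Cin : ℝ) ≤ α₂ * (Y + P₀.card + C.card) :=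
    hp.trans (mul_le_mul_of_nonneg_left (by linarith) hα₂.le)
  rw [hL, add_mul α₂]
  refine add_le_add hb (mul_le_mul_of_nonneg_left ?_ (by positivity))
  have : (0 : ℝ) ≤ P₀.card := by positivity
  linarith

/-- **Circles in `ℝ³` (the case `k = 3` of the main three-dimensional theorem).**
For each `ε > 0` there is a constant `c(ε)` such that the following holds, with a
constant `α` depending only on `ε`. If `P` is a set of `m` distinct points and `C`
a set of `n` distinct circles in `ℝ³` such that every algebraic surface of degree
at most `c(ε)` contains at most `q₂` circles of `C`, then
`I(P,C) ≤ α (m^{3/7+ε} n^{6/7} + m^{3/5+ε} n^{3/5} q₂^{1/5} + m + n)`. -/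
theorem circles_in_R3 (ε : ℝ) (hε : 0 < ε) :
    ∃ c : ℕ, ∃ α : ℝ, 0 < α ∧
      ∀ (P : Finset (Fin 3 → ℝ)) (C : Finset (Set (Fin 3 → ℝ))) (q₂ : ℕ),
        (∀ γ ∈ C, IsCircle γ) →
        (∀ f : MvPolynomial (Fin 3) ℝ, f ≠ 0 → f.totalDegree ≤ c →
            (C.filter fun γ => γ ⊆ zeroSet f).card ≤ q₂) →
        (Incidences P C : ℝ) ≤
          α * ((P.card : ℝ) ^ ((3 : ℝ) / 7 + ε) * (C.card : ℝ) ^ ((6 : ℝ) / 7)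
                + (P.card : ℝ) ^ ((3 : ℝ) / 5 + ε) * (C.card : ℝ) ^ ((3 : ℝ) / 5)
                    * (q₂ : ℝ) ^ ((1 : ℝ) / 5)
                + (P.card : ℝ) + (C.card : ℝ)) := by
  obtain ⟨c, α, hα, h⟩ := spatial_bound ε hε
  refine ⟨c, α, hα, fun P C q₂ hC hq => ?_⟩
  have h1 := h P C q₂ hC hq
  rw [mul_comm ((q₂ : ℝ) ^ ((1 : ℝ) / 5))] at h1
  exact h1
end
end

section
/- Let d ≥ 3 and k ≥ 2 be integers and let j be an integer with 2 ≤ j ≤ d−1. Let n, q_{d−1}, q_j be positive reals with q_j ≤ q_{d−1} ≤ n, and suppose that q_j ≥ (q_{d−1}/n)^{d(d−2)}·q_{d−1}. Then q_{d−1}^{(d−1)(j−1)(k−1)/((d−2)(jk−j+1))} · q_j^{(d−j−1)(k−1)/((d−2)(jk−j+1))} ≤ n^{d(j−1)(k−1)/((d−1)(jk−j+1))} · q_j^{(d−j)(k−1)/((d−1)(jk−j+1))}. -/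
/-- The key elementary inequality in the induction step of the `d`-dimensional
incidence theorem: if `3 ≤ d`, `2 ≤ k`, `2 ≤ j ≤ d-1`, and `0 < q_j ≤ q_{d-1} ≤ n`
satisfy `q_j ≥ (q_{d-1}/n)^{d(d-2)} q_{d-1}`, then
`q_{d-1}^{(d-1)(j-1)(k-1)/((d-2)(jk-j+1))} q_j^{(d-j-1)(k-1)/((d-2)(jk-j+1))}
  ≤ n^{d(j-1)(k-1)/((d-1)(jk-j+1))} q_j^{(d-j)(k-1)/((d-1)(jk-j+1))}`. -/
theorem key_inequality (d k j : ℕ) (hd : 3 ≤ d) (hk : 2 ≤ k)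
    (hj₁ : 2 ≤ j) (hj₂ : j ≤ d - 1)
    (n qd1 qj : ℝ) (hqj : 0 < qj) (h₁ : qj ≤ qd1) (h₂ : qd1 ≤ n)
    (h13 : (qd1 / n) ^ (d * (d - 2)) * qd1 ≤ qj) :
    qd1 ^ (((d : ℝ) - 1) * ((j : ℝ) - 1) * ((k : ℝ) - 1)
            / (((d : ℝ) - 2) * ((j : ℝ) * (k : ℝ) - (j : ℝ) + 1)))
      * qj ^ (((d : ℝ) - (j : ℝ) - 1) * ((k : ℝ) - 1)
            / (((d : ℝ) - 2) * ((j : ℝ) * (k : ℝ) - (j : ℝ) + 1))) ≤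
    n ^ ((d : ℝ) * ((j : ℝ) - 1) * ((k : ℝ) - 1)
            / (((d : ℝ) - 1) * ((j : ℝ) * (k : ℝ) - (j : ℝ) + 1)))
      * qj ^ (((d : ℝ) - (j : ℝ)) * ((k : ℝ) - 1)
            / (((d : ℝ) - 1) * ((j : ℝ) * (k : ℝ) - (j : ℝ) + 1))) := by
  have hq : 0 < qd1 := lt_of_lt_of_le hqj h₁
  have hn : 0 < n := lt_of_lt_of_le hq h₂
  have hdR : (3 : ℝ) ≤ d := by exact_mod_cast hd
  have hkR : (2 : ℝ) ≤ k := by exact_mod_cast hk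
  have hjR : (2 : ℝ) ≤ j := by exact_mod_cast hj₁
  have hD : 0 < (j : ℝ) * (k : ℝ) - (j : ℝ) + 1 := by nlinarith
  have hd1 : 0 < (d : ℝ) - 1 := by linarith
  have hd2 : 0 < (d : ℝ) - 2 := by linarith
  have hL := Real.log_le_log (by positivity) h13
  rw [Real.log_mul (by positivity) (by positivity), Real.log_pow,
    Real.log_div hq.ne' hn.ne', Nat.cast_mul, Nat.cast_sub (by omega)] at hL
  push_cast at hL
  rw [← Real.log_le_log_iff (by positivity) (by positivity),
    Real.log_mul (by positivity) (by positivity), Real.log_mul (by positivity) (by positivity),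
    Real.log_rpow hq, Real.log_rpow hqj, Real.log_rpow hn, Real.log_rpow hqj, ← sub_nonneg]
  have hc : 0 ≤ ((j : ℝ) - 1) * ((k : ℝ) - 1)
      / (((d : ℝ) - 1) * ((d : ℝ) - 2) * ((j : ℝ) * (k : ℝ) - (j : ℝ) + 1)) :=
    div_nonneg (mul_nonneg (by linarith) (by linarith)) (by positivity)
  have key := mul_nonneg hc (sub_nonneg.2 hL)
  refine le_of_le_of_eq key ?_
  generalize hE : (j : ℝ) * (k : ℝ) - (j : ℝ) + 1 = E at *
  have := hD.ne'
  have := hd1.ne'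
  have := hd2.ne'
  field_simp
  ring
end
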